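/- arXiv:2012.00311 — 6 statements merged into one kernel-verified Lean document; each statement's English description precedes it below -/
import Mathlib

section
/- Let G be a finite connected simple graph on n ≥ 3 vertices. G admits a feasible agency of strength α = 1 (equivalently, a feasible agency with k = n agents and time horizon T = n) if and only if G has a Hamiltonian cycle. -/
open SimpleGraph

/-- A walk with parking of time horizon `T` that visits every vertex and returns
to its starting vertex: a (traveling salesman) tour. -/
def AgencyTour {V : Type*} (G : SimpleGraph V) (T : ℕ) (a : ℕ → V) : Prop :=
  (∀ t < T, a t = a (t + 1) ∨ G.Adj (a t) (a (t + 1))) ∧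
  (∀ v : V, ∃ t ≤ T, a t = v) ∧
  a 0 = a T

/-- A feasible agency with `k` agents and time horizon `T`: each agent performs a
tour (with parking), and no two distinct agents crash in a node or in an edge. -/
def FeasibleAgency {V : Type*} (G : SimpleGraph V) (k T : ℕ) (a : Fin k → ℕ → V) : Prop :=
  (∀ i, AgencyTour G T (a i)) ∧
  ∀ i j : Fin k, i ≠ j →
    (∀ t ≤ T, a i t ≠ a j t) ∧
    (∀ t < T, ¬(a i t = a j (t + 1) ∧ a i (t + 1) = a j t ∧ a i t ≠ a i (t + 1)))

theorem exists_walk_of_seq {V : Type*} (G : SimpleGraph V) (m : ℕ) : ∀ (a : ℕ → V),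
    (∀ t < m, G.Adj (a t) (a (t + 1))) →
    ∃ p : G.Walk (a 0) (a m), p.length = m ∧ ∀ i ≤ m, p.getVert i = a i := by
  induction m with
  | zero =>
    intro a _
    refine ⟨Walk.nil, rfl, ?_⟩
    intro i hi
    obtain rfl : i = 0 := by omega
    rfl
  | succ m ih =>
    intro a h
    obtain ⟨p, hp, hv⟩ := ih (fun t => a (t + 1)) (fun t ht => h (t + 1) (by omega))
    refine ⟨Walk.cons (h 0 (by omega)) p, by simp [hp], ?_⟩
    intro i hi
    cases i with
    | zero => rfl
    | succ i => simpa using hv i (by omega)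

theorem hamiltonian_of_tour {V : Type*} [Fintype V] [DecidableEq V] (G : SimpleGraph V)
    (hn : 3 ≤ Fintype.card V) (a : ℕ → V) (h : AgencyTour G (Fintype.card V) a) :
    ∃ (v : V) (p : G.Walk v v), p.IsHamiltonianCycle := by
  obtain ⟨h1, h2, h3⟩ := h
  generalize hN : Fintype.card V = n at *
  have hsurj : Function.Surjective (fun i : Fin n => a (i.val + 1)) := by
    intro v
    obtain ⟨t, ht, rfl⟩ := h2 v
    rcases Nat.eq_zero_or_pos t with rfl | h0
    · refine ⟨⟨n - 1, by omega⟩, ?_⟩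
      have : n - 1 + 1 = n := by omega
      simp [this, h3]
    · refine ⟨⟨t - 1, by omega⟩, ?_⟩
      have : t - 1 + 1 = t := by omega
      simp [this]
  have hinj : Function.Injective (fun i : Fin n => a (i.val + 1)) :=
    ((Fintype.bijective_iff_surjective_and_card _).2 ⟨hsurj, by simp [hN]⟩).1
  have hinj' : ∀ s t, s < n → t < n → a (s + 1) = a (t + 1) → s = t := by
    intro s t hs ht hst
    have := @hinj ⟨s, hs⟩ ⟨t, ht⟩ hst
    simpa using this
  have hadj : ∀ t < n, G.Adj (a t) (a (t + 1)) := by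
    intro t ht
    refine (h1 t ht).resolve_left fun he => ?_
    cases t with
    | zero =>
      have h4 : a (n - 1 + 1) = a (0 + 1) := by
        rw [← he, h3]; congr 1; omega
      have := hinj' _ _ (by omega) (by omega) h4
      omega
    | succ t =>
      have := hinj' _ _ (by omega) (by omega) he
      omega
  obtain ⟨p, hp, hv⟩ := exists_walk_of_seq G n a hadj
  refine ⟨a 0, p.copy rfl h3.symm, ?_⟩
  rw [Walk.isHamiltonianCycle_iff_isCycle_and_length_eq,
    Walk.isCycle_iff_isPath_tail_and_le_length, ← Walk.IsPath.getVert_injOn_iff]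
  refine ⟨⟨?_, by simp [hp, hn]⟩, by simp [hp, hN]⟩
  have hl : (p.copy rfl h3.symm).tail.length + 1 = n := by
    rw [Walk.length_tail_add_one]
    · simp [hp]
    · rw [← Walk.length_eq_zero_iff]; simp [hp]; omega
  intro s hs t ht hst
  simp only [Set.mem_setOf_eq] at hs ht
  simp only [Walk.getVert_tail, Walk.getVert_copy] at hst
  rw [hv _ (by omega), hv _ (by omega)] at hst
  exact hinj' _ _ (by omega) (by omega) hst

theorem agency_of_hamiltonian {V : Type*} [Fintype V] [DecidableEq V] (G : SimpleGraph V)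
    (hn : 3 ≤ Fintype.card V) (v : V) (p : G.Walk v v) (hp : p.IsHamiltonianCycle) :
    ∃ a : Fin (Fintype.card V) → ℕ → V,
        FeasibleAgency G (Fintype.card V) (Fintype.card V) a := by
  have hlen := hp.length_eq
  have hmem := hp.mem_support
  have hinj := hp.isCycle.getVert_injOn'
  generalize Fintype.card V = n at *
  set c : ℕ → V := fun t => p.getVert (t % n) with hc
  have hmod : ∀ s t, c s = c t → s % n = t % n := by
    intro s t hst
    have h1 := Nat.mod_lt s (show n > 0 by omega)
    have h2 := Nat.mod_lt t (show n > 0 by omega)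
    exact hinj (by simp only [Set.mem_setOf_eq]; omega) (by simp only [Set.mem_setOf_eq]; omega) hst
  have hadj : ∀ t, G.Adj (c t) (c (t + 1)) := by
    intro t
    have h1 := Nat.mod_lt t (show n > 0 by omega)
    have h2 := p.adj_getVert_succ (i := t % n) (by omega)
    have h3 : c (t + 1) = p.getVert (t % n + 1) := by
      simp only [hc]
      rcases Nat.lt_or_ge (t % n + 1) n with h | h
      · rw [Nat.add_mod, Nat.mod_eq_of_lt (show 1 < n by omega), Nat.mod_eq_of_lt h]
      · have he : t % n + 1 = n := by omega
        rw [Nat.add_mod, Nat.mod_eq_of_lt (show 1 < n by omega), he, Nat.mod_self,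
          Walk.getVert_zero, ← hlen, Walk.getVert_length]
    rw [h3]; exact h2
  have hsurj : ∀ w, ∃ s < n, c s = w := by
    intro w
    obtain ⟨s, hs, hle⟩ := Walk.mem_support_iff_exists_getVert.1 (hmem w)
    rcases Nat.lt_or_ge s n with h | h
    · exact ⟨s, h, by simp only [hc]; rw [Nat.mod_eq_of_lt h, hs]⟩
    · have : s = p.length := by omega
      subst this
      refine ⟨0, by omega, ?_⟩
      simp only [hc, Nat.zero_mod, Walk.getVert_zero]
      rw [← hs, Walk.getVert_length]
  refine ⟨fun i t => c (i.val + t), fun i => ⟨fun t _ => Or.inr (hadj _), fun w => ?_, ?_⟩,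
    fun i j hij => ⟨fun t _ h => ?_, fun t _ h => ?_⟩⟩
  · obtain ⟨s, hs, rfl⟩ := hsurj w
    have hi := i.isLt
    rcases Nat.lt_or_ge s i.val with h | h
    · refine ⟨s + n - i.val, by omega, ?_⟩
      have : i.val + (s + n - i.val) = s + n := by omega
      simp only [this, hc, Nat.add_mod_right]
    · refine ⟨s - i.val, by omega, ?_⟩
      have : i.val + (s - i.val) = s := by omega
      simp only [this]
  · simp [hc]
  · have h1 : i.val ≡ j.val [MOD n] := Nat.ModEq.add_right_cancel' t (hmod _ _ h)
    exact hij (Fin.ext (Nat.ModEq.eq_of_lt_of_lt h1 i.isLt j.isLt))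
  · have h1 : i.val + t ≡ j.val + (t + 1) [MOD n] := hmod _ _ h.1
    have h2 : i.val + (t + 1) ≡ j.val + t [MOD n] := hmod _ _ h.2.1
    have h3 : 2 + (i.val + t) ≡ 0 + (i.val + t) [MOD n] := by
      have h4 := h2.add_right 1
      have e1 : i.val + (t + 1) + 1 = 2 + (i.val + t) := by ring
      have e2 : j.val + t + 1 = j.val + (t + 1) := by ring
      rw [e1, e2] at h4
      rw [Nat.zero_add]
      exact h4.trans h1.symm
    have h5 := Nat.ModEq.eq_of_lt_of_lt (Nat.ModEq.add_right_cancel' _ h3) (by omega) (by omega)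
    omega

/-- a connected graph on `n ≥ 3` vertices admits a feasible agency of
strength 1, i.e. with `k = n` agents and time horizon `T = n`, iff it has a
Hamiltonian cycle. -/
theorem stmt0 {V : Type*} [Fintype V] [DecidableEq V] (G : SimpleGraph V)
    (hconn : G.Connected) (hn : 3 ≤ Fintype.card V) :
    (∃ a : Fin (Fintype.card V) → ℕ → V,
        FeasibleAgency G (Fintype.card V) (Fintype.card V) a) ↔
      ∃ (v : V) (p : G.Walk v v), p.IsHamiltonianCycle := by
  constructor
  · rintro ⟨a, ha, -⟩
    exact hamiltonian_of_tour G hn (a ⟨0, by omega⟩) (ha _)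
  · rintro ⟨v, p, hp⟩
    exact agency_of_hamiltonian G hn v p hp
end

section
/- For every positive integer r there exists a tree on n = 7r + 6 vertices that admits a feasible agency with time horizon T = 16r + 12 and k = 4r + 3 agents; in particular there are arbitrarily large trees admitting a feasible agency with T/k = 4 (with T = (16n − 12)/7 and k = (4n − 3)/7). -/
open SimpleGraph

namespace Stmt5

/-- visit pattern of an end branch -/
def q (j : ℕ) : ℕ := if j = 1 then 1 else if j = 4 then 2 else 0

/-- visit pattern of a block on the way out -/
def p (j : ℕ) : ℕ :=
  if j = 0 then 0 else if j = 7 then 0 else if j = 2 then 2 else if j = 5 then 3 else 1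

/-- visit pattern of a block on the way back -/
def pb (j : ℕ) : ℕ :=
  if j = 0 then 0 else if j = 7 then 0 else if j = 2 then 5 else if j = 5 then 6 else 4

/-- the closed walk of length `16r+12` -/
def w (r t : ℕ) : ℕ :=
  if t < 6 then q t else if t < 6 + 8 * r then 3 + 7 * ((t - 6) / 8) + p ((t - 6) % 8)
  else if t < 12 + 8 * r then 3 + 7 * r + q (t - 6 - 8 * r)
  else if t < 12 + 16 * r then
    3 + 7 * (r - 1 - (t - 12 - 8 * r) / 8) + pb ((t - 12 - 8 * r) % 8)
  else 0

/-- time at which vertex `v` is visited, given the time mod 4 -/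
def g (r v c : ℕ) : ℕ :=
  if v = 0 then (if c = 0 then 0 else if c = 1 then 5 else if c = 2 then 2 else 3)
  else if v = 1 then 1 else if v = 2 then 4
  else if v < 3 + 7 * r then
    (let i := (v - 3) / 7
     let j := (v - 3) % 7
     let o := 6 + 8 * i
     let b := 4 + 16 * r - 8 * i
     if j = 0 then (if c = 0 then b else if c = 1 then o + 7 else if c = 2 then o else b + 7)
     else if j = 1 then
       (if c = 0 then o + 6 else if c = 1 then o + 3 else if c = 2 then o + 4 else o + 1)
     else if j = 2 then o + 2
     else if j = 3 then o + 5
     else if j = 4 then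
       (if c = 0 then b + 4 else if c = 1 then b + 1 else if c = 2 then b + 6 else b + 3)
     else if j = 5 then b + 2 else b + 5)
  else
    (let e := 6 + 8 * r
     if v = 3 + 7 * r then
       (if c = 0 then e + 2 else if c = 1 then e + 3 else if c = 2 then e else e + 5)
     else if v = 4 + 7 * r then e + 1 else e + 4)

/-- parent -/
def par (r v : ℕ) : ℕ :=
  if v ≤ 2 then 0
  else if (v - 3) % 7 = 0 then v - 7
  else if v < 3 + 7 * r then
    (let j := (v - 3) % 7
     let s := v - j
     if j = 1 then s else if j = 4 then s else if j < 4 then s + 1 else s + 4)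
  else 3 + 7 * r

/-- case analysis on the time -/
theorem time_cases (r : ℕ) (P : ℕ → Prop)
    (h1 : ∀ j < 6, P j)
    (h2 : ∀ i < r, ∀ j < 8, P (6 + 8 * i + j))
    (h3 : ∀ j < 6, P (6 + 8 * r + j))
    (h4 : ∀ i < r, ∀ j < 8, P (4 + 16 * r - 8 * i + j)) :
    ∀ t < 16 * r + 12, P t := by
  intro t ht
  by_cases a : t < 6
  · exact h1 t a
  by_cases b : t < 6 + 8 * r
  · have := h2 ((t - 6) / 8) (by omega) ((t - 6) % 8) (by omega)
    convert this using 1; omega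
  by_cases c : t < 12 + 8 * r
  · have := h3 (t - 6 - 8 * r) (by omega)
    convert this using 1; omega
  · have := h4 (r - 1 - (t - 12 - 8 * r) / 8) (by omega) ((t - 12 - 8 * r) % 8) (by omega)
    convert this using 1; omega

theorem w_start (r j : ℕ) (hj : j < 6) : w r j = q j := by simp [w, hj]

theorem w_out (r i j : ℕ) (hi : i < r) (hj : j < 8) : w r (6 + 8 * i + j) = 3 + 7 * i + p j := by
  have h1 : ¬ (6 + 8 * i + j < 6) := by omega
  have h2 : 6 + 8 * i + j < 6 + 8 * r := by omega
  have h3 : (6 + 8 * i + j - 6) / 8 = i := by omega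
  have h4 : (6 + 8 * i + j - 6) % 8 = j := by omega
  rw [w, if_neg h1, if_pos h2, h3, h4]

theorem w_end (r j : ℕ) (hj : j < 6) : w r (6 + 8 * r + j) = 3 + 7 * r + q j := by
  have h1 : ¬ (6 + 8 * r + j < 6) := by omega
  have h2 : ¬ 6 + 8 * r + j < 6 + 8 * r := by omega
  have h3 : 6 + 8 * r + j < 12 + 8 * r := by omega
  have h4 : (6 + 8 * r + j - 6 - 8 * r) = j := by omega
  rw [w, if_neg h1, if_neg h2, if_pos h3, h4]

theorem w_back (r i j : ℕ) (hi : i < r) (hj : j < 8) :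
    w r (4 + 16 * r - 8 * i + j) = 3 + 7 * i + pb j := by
  have h1 : ¬ (4 + 16 * r - 8 * i + j < 6) := by omega
  have h2 : ¬ 4 + 16 * r - 8 * i + j < 6 + 8 * r := by omega
  have h3 : ¬ 4 + 16 * r - 8 * i + j < 12 + 8 * r := by omega
  have h4 : 4 + 16 * r - 8 * i + j < 12 + 16 * r := by omega
  have h5 : r - 1 - (4 + 16 * r - 8 * i + j - 12 - 8 * r) / 8 = i := by omega
  have h6 : (4 + 16 * r - 8 * i + j - 12 - 8 * r) % 8 = j := by omega
  rw [w, if_neg h1, if_neg h2, if_neg h3, if_pos h4, h5, h6]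

theorem w_T (r : ℕ) : w r (16 * r + 12) = 0 := by
  rw [w, if_neg (by omega), if_neg (by omega), if_neg (by omega), if_neg (by omega)]

theorem w_lt (r : ℕ) : ∀ t < 16 * r + 12, w r t < 7 * r + 6 := by
  have hp : ∀ j, p j < 7 := by intro j; unfold p; split_ifs <;> omega
  have hpb : ∀ j, pb j < 7 := by intro j; unfold pb; split_ifs <;> omega
  have hq : ∀ j, q j < 3 := by intro j; unfold q; split_ifs <;> omega
  apply time_cases
  · intro j hj; rw [w_start r j hj]; have := hq j; omega
  · intro i hi j hj; rw [w_out r i j hi hj]; have := hp j; omega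
  · intro j hj; rw [w_end r j hj]; have := hq j; omega
  · intro i hi j hj; rw [w_back r i j hi hj]; have := hpb j; omega

theorem g_w (r : ℕ) : ∀ t < 16 * r + 12, g r (w r t) (t % 4) = t := by
  apply time_cases
  · intro j hj; rw [w_start r j hj]; interval_cases j <;> simp [q, g]
  · intro i hi j hj; rw [w_out r i j hi hj]
    interval_cases j <;> simp only [p, g] <;> grind
  · intro j hj; rw [w_end r j hj]
    interval_cases j <;> simp only [q, g] <;> grind
  · intro i hi j hj; rw [w_back r i j hi hj]
    interval_cases j <;> simp only [pb, g] <;> grind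

/-- a step of the walk -/
def Step (r t : ℕ) (u v : ℕ) : Prop :=
  (u = v ∨ (0 < v ∧ u = par r v) ∨ (0 < u ∧ v = par r u)) ∧
  (u ≠ v → g r v (t % 4) + 1 ≠ g r u ((t + 1) % 4))

set_option maxHeartbeats 2000000 in
theorem step (r : ℕ) : ∀ t < 16 * r + 12, Step r t (w r t) (w r (t + 1)) := by
  apply time_cases
  · intro j hj
    rcases (show j = 5 ∨ j + 1 < 6 by omega) with rfl | h
    · rw [w_start r 5 (by omega)]
      have e : w r (5 + 1) = 3 := by
        rcases Nat.eq_zero_or_pos r with rfl | h0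
        · simp [w, q]
        · have := w_out r 0 0 h0 (by omega); simpa [p] using this
      rw [e]
      simp only [q, g, par, Step]; grind
    · rw [w_start r j hj, w_start r (j+1) h]
      have h5 : j < 5 := by omega
      interval_cases j <;> simp [q, g, par, Step]
  · intro i hi j hj; rw [w_out r i j hi hj]
    rcases (show j = 7 ∨ j + 1 < 8 by omega) with rfl | h
    · have e : w r (6 + 8 * i + 7 + 1) = 3 + 7 * (i + 1) := by
        rcases (show i + 1 = r ∨ i + 1 < r by omega) with rfl | h0
        · have := w_end (i+1) 0 (by omega)
          rw [show 6 + 8 * i + 7 + 1 = 6 + 8 * (i + 1) + 0 by omega, this]; simp [q]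
        · have := w_out r (i+1) 0 h0 (by omega)
          rw [show 6 + 8 * i + 7 + 1 = 6 + 8 * (i + 1) + 0 by omega, this]; simp [p]
      rw [e]
      simp only [p, g, par, Step]; grind
    · rw [add_assoc _ j 1, w_out r i (j+1) hi h]
      have h5 : j < 7 := by omega
      interval_cases j <;> simp only [p, g, par, Step] <;> grind
  · intro j hj; rw [w_end r j hj]
    rcases (show j = 5 ∨ j + 1 < 6 by omega) with rfl | h
    · have e : w r (6 + 8 * r + 5 + 1) = 7 * r - 4 := by
        rcases Nat.eq_zero_or_pos r with rfl | h0
        · simp [w]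
        · have := w_back r (r-1) 0 (by omega) (by omega)
          rw [show 6 + 8 * r + 5 + 1 = 4 + 16 * r - 8 * (r - 1) + 0 by omega, this]
          simp [pb]; omega
      rw [e]
      simp only [q, g, par, Step]; grind
    · rw [add_assoc _ j 1, w_end r (j+1) h]
      have h5 : j < 5 := by omega
      interval_cases j <;> simp only [q, g, par, Step] <;> grind
  · intro i hi j hj; rw [w_back r i j hi hj]
    rcases (show j = 7 ∨ j + 1 < 8 by omega) with rfl | h
    · have e : w r (4 + 16 * r - 8 * i + 7 + 1) = 7 * i - 4 := by
        rcases Nat.eq_zero_or_pos i with rfl | h0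
        · rw [show 4 + 16 * r - 8 * 0 + 7 + 1 = 16 * r + 12 by omega, w_T r]
        · have := w_back r (i-1) 0 (by omega) (by omega)
          rw [show 4 + 16 * r - 8 * i + 7 + 1 = 4 + 16 * r - 8 * (i - 1) + 0 by omega, this]
          simp [pb]; omega
      rw [e]
      clear e
      have m1 : (4 + 16 * r - 8 * i + 7) % 4 = 3 := by omega
      have m2 : (4 + 16 * r - 8 * i + 7 + 1) % 4 = 0 := by omega
      rw [Step, m1, m2]
      clear m1 m2
      rcases i with _ | i
      · simp only [pb, g, par]; grind
      · rw [show 7 * (i + 1) - 4 = 3 + 7 * i by omega]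
        simp only [pb, g, par]; grind
    · rw [add_assoc _ j 1, w_back r i (j+1) hi h]
      have h5 : j < 7 := by omega
      have m1 : (4 + 16 * r - 8 * i + j) % 4 = j % 4 := by omega
      have m2 : (4 + 16 * r - 8 * i + j + 1) % 4 = (j + 1) % 4 := by omega
      rw [Step, m1, m2]
      clear m1 m2
      interval_cases j <;> simp only [pb, g, par] <;> grind (splits := 40)

theorem w_surj (r v : ℕ) (hv : v < 7 * r + 6) : ∃ t < 16 * r + 12, w r t = v := by
  by_cases a : v < 3
  · interval_cases v
    · exact ⟨0, by omega, by simp [w, q]⟩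
    · exact ⟨1, by omega, by simp [w, q]⟩
    · exact ⟨4, by omega, by simp [w, q]⟩
  by_cases b : v < 3 + 7 * r
  · obtain ⟨i, j, hj, rfl⟩ : ∃ i j, j < 7 ∧ v = 3 + 7 * i + j :=
      ⟨(v - 3) / 7, (v - 3) % 7, by omega, by omega⟩
    have hi : i < r := by omega
    have F := fun j hj => w_out r i j hi hj
    have B := fun j hj => w_back r i j hi hj
    interval_cases j
    · exact ⟨_, by omega, F 0 (by omega)⟩
    · exact ⟨_, by omega, F 1 (by omega)⟩
    · exact ⟨_, by omega, F 2 (by omega)⟩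
    · exact ⟨_, by omega, F 5 (by omega)⟩
    · exact ⟨_, by omega, B 1 (by omega)⟩
    · exact ⟨_, by omega, B 2 (by omega)⟩
    · exact ⟨_, by omega, B 5 (by omega)⟩
  · obtain ⟨j, hj, rfl⟩ : ∃ j, j < 3 ∧ v = 3 + 7 * r + j := ⟨v - 3 - 7 * r, by omega, by omega⟩
    interval_cases j
    · exact ⟨_, by omega, w_end r 0 (by omega)⟩
    · exact ⟨_, by omega, w_end r 1 (by omega)⟩
    · exact ⟨_, by omega, w_end r 4 (by omega)⟩

theorem par_lt (r v : ℕ) (hv : 0 < v) : par r v < v := by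
  simp only [par]; split_ifs <;> omega

/-- the tree -/
def Gr (r : ℕ) : SimpleGraph (Fin (7 * r + 6)) where
  Adj u v := (0 < v.1 ∧ u.1 = par r v.1) ∨ (0 < u.1 ∧ v.1 = par r u.1)
  symm := ⟨fun u v h => h.symm⟩
  loopless := ⟨fun u h => by
    rcases h with ⟨h, e⟩ | ⟨h, e⟩ <;> have := par_lt r u.1 h <;> omega⟩

theorem Gr_connected (r : ℕ) : (Gr r).Connected := by
  have key : ∀ n (h : n < 7 * r + 6), (Gr r).Reachable ⟨n, h⟩ ⟨0, by omega⟩ := by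
    intro n
    induction n using Nat.strong_induction_on with
    | _ n ih =>
      intro h
      rcases Nat.eq_zero_or_pos n with rfl | h0
      · exact Reachable.refl _
      · have hl := par_lt r n h0
        refine Reachable.trans (Adj.reachable ?_) (ih (par r n) hl (by omega))
        exact Or.inr ⟨h0, rfl⟩
  have : Nonempty (Fin (7 * r + 6)) := ⟨⟨0, by omega⟩⟩
  exact Connected.mk fun u v => (key u.1 u.2).trans (key v.1 v.2).symm

theorem Gr_tree (r : ℕ) : (Gr r).IsTree := by
  classical
  rw [isTree_iff_connected_and_card]
  refine ⟨Gr_connected r, le_antisymm ?_ (Gr_connected r).card_vert_le_card_edgeSet_add_one⟩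
  let f : Fin (7 * r + 5) → Sym2 (Fin (7 * r + 6)) := fun v =>
    s(⟨v.1 + 1, by omega⟩, ⟨par r (v.1 + 1), by have := par_lt r (v.1 + 1) (by omega); omega⟩)
  have hs : (Gr r).edgeSet ⊆ Set.range f := by
    have aux : ∀ u v : Fin (7 * r + 6), 0 < v.1 → u.1 = par r v.1 → s(v, u) ∈ Set.range f := by
      intro u v h0 h
      refine ⟨⟨v.1 - 1, by omega⟩, ?_⟩
      have e : v.1 - 1 + 1 = v.1 := by omega
      simp only [f, e]
      have hu : u = ⟨par r v.1, by omega⟩ := Fin.ext h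
      rw [hu]
    intro e
    induction e using Sym2.ind with
    | _ u v =>
      intro h
      rcases h with ⟨h0, h⟩ | ⟨h0, h⟩
      · rw [Sym2.eq_swap]; exact aux u v h0 h
      · exact aux v u h0 h
  have h1 := Nat.card_mono (Set.finite_range f) hs
  have h2 : Nat.card (Set.range f) ≤ Nat.card (Fin (7 * r + 5)) := Finite.card_range_le f
  simp at h1 h2 ⊢
  omega

theorem inj (r s s' : ℕ) (hs : s < 16 * r + 12) (hs' : s' < 16 * r + 12)
    (h : s % 4 = s' % 4) (e : w r s = w r s') : s = s' := by
  rw [← g_w r s hs, ← g_w r s' hs', e, h]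

theorem noswap (r s s' : ℕ) (hs : s < 16 * r + 12) (hs' : s' < 16 * r + 12)
    (h : s % 4 = s' % 4) (e : w r s = w r (s' + 1)) (e' : w r (s + 1) = w r s')
    (hne : w r s ≠ w r (s + 1)) : False := by
  have h1 := g_w r s' hs'
  rw [← e', ← h] at h1
  rcases (show s' + 1 = 16 * r + 12 ∨ s' + 1 < 16 * r + 12 by omega) with h2 | h2
  · rw [h2, w_T] at e
    have h3 := g_w r s hs
    have h4 : s % 4 = 3 := by omega
    rw [e, h4] at h3
    have h5 : s = 3 := by simpa [g] using h3.symm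
    subst h5
    simp [w, q, g] at h1
    omega
  · have h3 := g_w r (s' + 1) h2
    rw [← e, show (s' + 1) % 4 = (s + 1) % 4 by omega] at h3
    apply (step r s hs).2 hne
    rw [h1, h3]

/-- shifted time -/
def tm (r i t : ℕ) : ℕ := (t + 4 * i) % (16 * r + 12)

theorem tm_lt (r i t : ℕ) : tm r i t < 16 * r + 12 := Nat.mod_lt _ (by omega)

theorem tm_mod (r i t : ℕ) : tm r i t % 4 = t % 4 := by
  unfold tm
  rw [Nat.mod_mod_of_dvd _ (by omega)]; omega

theorem w_tm_succ (r i t : ℕ) : w r (tm r i (t + 1)) = w r (tm r i t + 1) := by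
  have h := tm_lt r i t
  have e : tm r i (t + 1) = (tm r i t + 1) % (16 * r + 12) := by
    simp [tm, add_right_comm]
  rcases (show tm r i t + 1 = 16 * r + 12 ∨ tm r i t + 1 < 16 * r + 12 by omega) with h2 | h2
  · rw [e, h2, w_T, Nat.mod_self]; simp [w, q]
  · rw [e, Nat.mod_eq_of_lt h2]

theorem tm_inj (r i j t : ℕ) (hi : i < 4 * r + 3) (hj : j < 4 * r + 3)
    (h : tm r i t = tm r j t) : i = j := by
  have h1 : t + 4 * i ≡ t + 4 * j [MOD 16 * r + 12] := h
  have h2 := Nat.ModEq.add_left_cancel' t h1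
  have h3 : 4 * i % (16 * r + 12) = 4 * j % (16 * r + 12) := h2
  rw [Nat.mod_eq_of_lt (by omega), Nat.mod_eq_of_lt (by omega)] at h3
  omega

/-- surjectivity in shifted time -/
theorem tm_surj (r i s : ℕ) (hi : i < 4 * r + 3) (hs : s < 16 * r + 12) :
    ∃ t ≤ 16 * r + 12, tm r i t = s := by
  by_cases h : 4 * i ≤ s
  · refine ⟨s - 4 * i, by omega, ?_⟩
    rw [tm, Nat.sub_add_cancel h, Nat.mod_eq_of_lt hs]
  · refine ⟨s + (16 * r + 12) - 4 * i, by omega, ?_⟩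
    rw [tm, Nat.sub_add_cancel (by omega), Nat.add_mod_right, Nat.mod_eq_of_lt hs]

end Stmt5

/-- for every positive integer `r` there is a tree on `7r + 6`
vertices admitting a feasible agency with time horizon `T = 16r + 12` and
`k = 4r + 3` agents (so `T/k = 4`). -/
theorem stmt5 (r : ℕ) (hr : 0 < r) :
    ∃ G : SimpleGraph (Fin (7 * r + 6)), G.IsTree ∧
      ∃ a : Fin (4 * r + 3) → ℕ → Fin (7 * r + 6),
        FeasibleAgency G (4 * r + 3) (16 * r + 12) a := by
  refine ⟨Stmt5.Gr r, Stmt5.Gr_tree r,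
    fun i t => ⟨Stmt5.w r (Stmt5.tm r i t), Stmt5.w_lt r _ (Stmt5.tm_lt r i t)⟩, ?_, ?_⟩
  · intro i
    refine ⟨?_, ?_, ?_⟩
    · intro t _
      have h := (Stmt5.step r _ (Stmt5.tm_lt r i t)).1
      rw [← Stmt5.w_tm_succ] at h
      rcases h with h | h
      · exact Or.inl (Fin.ext h)
      · exact Or.inr h
    · intro v
      obtain ⟨s, hs, e⟩ := Stmt5.w_surj r v.1 v.2
      obtain ⟨t, ht, e'⟩ := Stmt5.tm_surj r i s i.2 hs
      exact ⟨t, ht, Fin.ext (by simp [e', e])⟩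
    · apply Fin.ext
      simp [Stmt5.tm]
  · intro i j hij
    refine ⟨?_, ?_⟩
    · intro t _ h
      have h' := congrArg Fin.val h
      apply hij
      apply Fin.ext
      apply Stmt5.tm_inj r i j t i.2 j.2
      exact Stmt5.inj r _ _ (Stmt5.tm_lt r i t) (Stmt5.tm_lt r j t)
        (by rw [Stmt5.tm_mod, Stmt5.tm_mod]) h'
    · rintro t _ ⟨h1, h2, h3⟩
      have h1' := congrArg Fin.val h1
      have h2' := congrArg Fin.val h2
      have h3' := fun e => h3 (Fin.ext e)
      simp only [Stmt5.w_tm_succ] at h1' h2' h3'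
      exact Stmt5.noswap r _ _ (Stmt5.tm_lt r i t) (Stmt5.tm_lt r j t)
        (by rw [Stmt5.tm_mod, Stmt5.tm_mod]) h1' h2' h3'
end

section
/- For every positive integer q there exists a tree on n = 5q + 6 vertices that admits a feasible agency without parking with time horizon T = 2n − 2 = 10q + 10 and k = 2q + 2 = T/5 agents; in particular there are arbitrarily large trees with a feasible agency without parking such that T = 2n − 2 and k = T/5. -/
open SimpleGraph

/-- A walk without parking of time horizon `T` that visits every vertex and returns
to its starting vertex: a tour without parking. -/
def AgencyTourNP {V : Type*} (G : SimpleGraph V) (T : ℕ) (a : ℕ → V) : Prop :=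
  (∀ t < T, G.Adj (a t) (a (t + 1))) ∧
  (∀ v : V, ∃ t ≤ T, a t = v) ∧
  a 0 = a T

/-- A feasible agency without parking with `k` agents and time horizon `T`. -/
def FeasibleAgencyNP {V : Type*} (G : SimpleGraph V) (k T : ℕ) (a : Fin k → ℕ → V) : Prop :=
  (∀ i, AgencyTourNP G T (a i)) ∧
  ∀ i j : Fin k, i ≠ j →
    (∀ t ≤ T, a i t ≠ a j t) ∧
    (∀ t < T, ¬(a i t = a j (t + 1) ∧ a i (t + 1) = a j t ∧ a i t ≠ a i (t + 1)))

/-- parent function of the tree -/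
def pA (q v : ℕ) : ℕ :=
  if v ≤ 2 then v - 1
  else if v % 5 = 2 then v - 5
  else if v % 5 = 3 then v - 1
  else if v % 5 = 4 then (if 5 * q + 2 ≤ v then v - 2 else v - 1)
  else if v % 5 = 0 then (if 5 * q + 2 ≤ v then v - 3 else v - 2)
  else v - 3

/-- the Euler tour -/
def wA (q x : ℕ) : ℕ :=
  if x = 0 then 0
  else if x = 1 then 1
  else if x ≤ q + 1 then 5 * x - 8
  else if x ≤ q + 8 then
    (if (x - (q + 2)) % 2 = 0 then 5 * q + 2 else 5 * q + 3 + (x - (q + 2)) / 2)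
  else if x = 10 * q + 9 then 1
  else if 10 * q + 10 ≤ x then 0
  else if (10 * q + 17 - x) % 9 = 0 ∨ (10 * q + 17 - x) % 9 = 8 then
    5 * ((10 * q + 17 - x) / 9) - 3
  else if (10 * q + 17 - x) % 2 = ((10 * q + 17 - x) / 9 + 1) % 2 then
    5 * ((10 * q + 17 - x) / 9) - 2
  else 5 * ((10 * q + 17 - x) / 9) - 2 + ((10 * q + 17 - x) % 9) / 2

/-- position classification -/
def nA (q v x : ℕ) : Prop :=
  (v = 0 ∧ (x = 0 ∨ x = 10 * q + 10)) ∨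
  (v = 1 ∧ (x = 1 ∨ x = 10 * q + 9)) ∨
  (∃ j, 1 ≤ j ∧ j ≤ q ∧ v + 3 = 5 * j ∧
    (x = j + 1 ∨ x + 9 * j = 10 * q + 17 ∨ x + 9 * j = 10 * q + 9)) ∨
  (∃ j, 1 ≤ j ∧ j ≤ q ∧ v + 2 = 5 * j ∧
    (x + 9 * j = 10 * q + 10 ∨ x + 9 * j = 10 * q + 12 ∨ x + 9 * j = 10 * q + 14 ∨
      x + 9 * j = 10 * q + 16)) ∨
  (∃ j m, 1 ≤ j ∧ j ≤ q ∧ 1 ≤ m ∧ m ≤ 3 ∧ v + 2 = 5 * j + m ∧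
    x + 9 * j + 2 * m = 10 * q + 17) ∨
  (v = 5 * q + 2 ∧ (x = q + 2 ∨ x = q + 4 ∨ x = q + 6 ∨ x = q + 8)) ∨
  (∃ m, m ≤ 2 ∧ v = 5 * q + 3 + m ∧ x = q + 3 + 2 * m)

/-- edge classification: `v` entered from its parent at step `d`, left at step `u` -/
def eA (q v d u : ℕ) : Prop :=
  (v = 1 ∧ d = 0 ∧ u = 10 * q + 9) ∨
  (∃ j, 1 ≤ j ∧ j ≤ q ∧ v + 3 = 5 * j ∧ d = j ∧ u + 9 * j = 10 * q + 17) ∨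
  (∃ j, 1 ≤ j ∧ j ≤ q ∧ v + 2 = 5 * j ∧ d + 9 * j = 10 * q + 9 ∧ u = d + 7) ∨
  (∃ j m, 1 ≤ j ∧ j ≤ q ∧ 1 ≤ m ∧ m ≤ 3 ∧ v + 2 = 5 * j + m ∧
    d + 9 * j + 2 * m = 10 * q + 16 ∧ u = d + 1) ∨
  (v = 5 * q + 2 ∧ d = q + 1 ∧ u = q + 8) ∨
  (∃ m, m ≤ 2 ∧ v = 5 * q + 3 + m ∧ d = q + 2 + 2 * m ∧ u = d + 1)

set_option maxHeartbeats 8000000 in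
theorem nA_wA (q x v : ℕ) (hq : 0 < q) (h : nA q v x) : wA q x = v := by
  unfold nA at h
  unfold wA
  rcases h with ⟨h1, h2⟩ | ⟨h1, h2⟩ | ⟨j, h1, h2, h3, h4⟩ | ⟨j, h1, h2, h3, h4⟩ |
    ⟨j, m, h1, h2, h3, h4, h5, h6⟩ | ⟨h1, h2⟩ | ⟨m, h1, h2, h3⟩
  · rcases h2 with h2 | h2 <;> split_ifs <;> omega
  · rcases h2 with h2 | h2 <;> split_ifs <;> omega
  · rcases h4 with h4 | h4 | h4 <;> split_ifs <;> omega
  · rcases h4 with h4 | h4 | h4 | h4 <;> split_ifs <;> omega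
  · have : m = 1 ∨ m = 2 ∨ m = 3 := by omega
    rcases this with rfl | rfl | rfl <;> split_ifs <;> omega
  · rcases h2 with h2 | h2 | h2 | h2 <;> split_ifs <;> omega
  · split_ifs <;> omega

theorem eA_n1 (q v d u : ℕ) (hq : 0 < q) (h : eA q v d u) : nA q v (d + 1) := by
  rcases h with ⟨h1, h2⟩ | ⟨j, h1, h2, h3, h4⟩ | ⟨j, h1, h2, h3, h4⟩ |
    ⟨j, m, h1, h2, h3, h4, h5, h6⟩ | ⟨h1, h2⟩ | ⟨m, h1, h2, h3⟩
  · exact Or.inr (Or.inl (by omega))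
  · exact Or.inr (Or.inr (Or.inl ⟨j, by omega⟩))
  · exact Or.inr (Or.inr (Or.inr (Or.inl ⟨j, by omega⟩)))
  · exact Or.inr (Or.inr (Or.inr (Or.inr (Or.inl ⟨j, m, by omega⟩))))
  · exact Or.inr (Or.inr (Or.inr (Or.inr (Or.inr (Or.inl (by omega))))))
  · exact Or.inr (Or.inr (Or.inr (Or.inr (Or.inr (Or.inr ⟨m, by omega⟩)))))

theorem eA_n2 (q v d u : ℕ) (hq : 0 < q) (h : eA q v d u) : nA q v u := by
  rcases h with ⟨h1, h2⟩ | ⟨j, h1, h2, h3, h4⟩ | ⟨j, h1, h2, h3, h4⟩ |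
    ⟨j, m, h1, h2, h3, h4, h5, h6⟩ | ⟨h1, h2⟩ | ⟨m, h1, h2, h3⟩
  · exact Or.inr (Or.inl (by omega))
  · exact Or.inr (Or.inr (Or.inl ⟨j, by omega⟩))
  · exact Or.inr (Or.inr (Or.inr (Or.inl ⟨j, by omega⟩)))
  · exact Or.inr (Or.inr (Or.inr (Or.inr (Or.inl ⟨j, m, by omega⟩))))
  · exact Or.inr (Or.inr (Or.inr (Or.inr (Or.inr (Or.inl (by omega))))))
  · exact Or.inr (Or.inr (Or.inr (Or.inr (Or.inr (Or.inr ⟨m, by omega⟩)))))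

theorem eA_p (q v d u : ℕ) (hq : 0 < q) (h : eA q v d u) :
    nA q (pA q v) d ∧ nA q (pA q v) (u + 1) := by
  rcases h with ⟨h1, h2⟩ | ⟨j, h1, h2, h3, h4⟩ | ⟨j, h1, h2, h3, h4⟩ |
    ⟨j, m, h1, h2, h3, h4, h5, h6⟩ | ⟨h1, h2⟩ | ⟨m, h1, h2, h3⟩
  · have : pA q v = 0 := by unfold pA; split_ifs <;> omega
    rw [this]
    exact ⟨Or.inl (by omega), Or.inl (by omega)⟩
  · by_cases hj : j = 1
    · have : pA q v = 1 := by unfold pA; split_ifs <;> omega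
      rw [this]
      exact ⟨Or.inr (Or.inl (by omega)), Or.inr (Or.inl (by omega))⟩
    · have : pA q v = v - 5 := by unfold pA; split_ifs <;> omega
      rw [this]
      exact ⟨Or.inr (Or.inr (Or.inl ⟨j - 1, by omega⟩)), Or.inr (Or.inr (Or.inl ⟨j - 1, by omega⟩))⟩
  · have : pA q v = v - 1 := by unfold pA; split_ifs <;> omega
    rw [this]
    exact ⟨Or.inr (Or.inr (Or.inl ⟨j, by omega⟩)), Or.inr (Or.inr (Or.inl ⟨j, by omega⟩))⟩
  · have : pA q v = 5 * j - 2 := by unfold pA; split_ifs <;> omega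
    rw [this]
    exact ⟨Or.inr (Or.inr (Or.inr (Or.inl ⟨j, by omega⟩))),
      Or.inr (Or.inr (Or.inr (Or.inl ⟨j, by omega⟩)))⟩
  · have : pA q v = v - 5 := by unfold pA; split_ifs <;> omega
    rw [this]
    exact ⟨Or.inr (Or.inr (Or.inl ⟨q, by omega⟩)), Or.inr (Or.inr (Or.inl ⟨q, by omega⟩))⟩
  · have : pA q v = 5 * q + 2 := by unfold pA; split_ifs <;> omega
    rw [this]
    exact ⟨Or.inr (Or.inr (Or.inr (Or.inr (Or.inr (Or.inl (by omega)))))),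
      Or.inr (Or.inr (Or.inr (Or.inr (Or.inr (Or.inl (by omega))))))⟩

theorem nA_inj (q v x y : ℕ) (hq : 0 < q) (hx : x < 10 * q + 10) (hy : y < 10 * q + 10)
    (h : nA q v x) (h' : nA q v y) (hm : x % 5 = y % 5) : x = y := by
  rcases h with ⟨h1, h2⟩ | ⟨h1, h2⟩ | ⟨j, h1, h2, h3, h4⟩ | ⟨j, h1, h2, h3, h4⟩ |
    ⟨j, m, h1, h2, h3, h4, h5, h6⟩ | ⟨h1, h2⟩ | ⟨m, h1, h2, h3⟩ <;>
  rcases h' with ⟨k1, k2⟩ | ⟨k1, k2⟩ | ⟨i, k1, k2, k3, k4⟩ | ⟨i, k1, k2, k3, k4⟩ |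
    ⟨i, l, k1, k2, k3, k4, k5, k6⟩ | ⟨k1, k2⟩ | ⟨l, k1, k2, k3⟩ <;> omega

theorem eA_mod (q v d u d' u' : ℕ) (hq : 0 < q)
    (h : eA q v d u) (h' : eA q v d' u') : d % 5 ≠ u' % 5 := by
  rcases h with ⟨h1, h2⟩ | ⟨j, h1, h2, h3, h4⟩ | ⟨j, h1, h2, h3, h4⟩ |
    ⟨j, m, h1, h2, h3, h4, h5, h6⟩ | ⟨h1, h2⟩ | ⟨m, h1, h2, h3⟩ <;>
  rcases h' with ⟨k1, k2⟩ | ⟨i, k1, k2, k3, k4⟩ | ⟨i, k1, k2, k3, k4⟩ |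
    ⟨i, l, k1, k2, k3, k4, k5, k6⟩ | ⟨k1, k2⟩ | ⟨l, k1, k2, k3⟩ <;>
  first
  | omega
  | (have hji : j = i := by omega
     subst hji
     omega)

theorem eA_bd (q v d u : ℕ) (h : eA q v d u) : 0 < v ∧ v < 5 * q + 6 := by
  rcases h with ⟨h1, h2⟩ | ⟨j, h1, h2, h3, h4⟩ | ⟨j, h1, h2, h3, h4⟩ |
    ⟨j, m, h1, h2, h3, h4, h5, h6⟩ | ⟨h1, h2⟩ | ⟨m, h1, h2, h3⟩ <;> omega

/-- every step is a traversal of an edge -/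
theorem eA_step (q x : ℕ) (hq : 0 < q) (hx : x < 10 * q + 10) :
    ∃ v d u, eA q v d u ∧ (x = d ∨ x = u) := by
  by_cases h0 : x = 0
  · exact ⟨1, 0, 10 * q + 9, Or.inl (by omega), by omega⟩
  by_cases h1 : x ≤ q
  · exact ⟨5 * x - 3, x, 10 * q + 17 - 9 * x, Or.inr (Or.inl ⟨x, by omega⟩), by omega⟩
  by_cases h2 : x = q + 1 ∨ x = q + 8
  · exact ⟨5 * q + 2, q + 1, q + 8, Or.inr (Or.inr (Or.inr (Or.inr (Or.inl (by omega))))), by omega⟩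
  by_cases h3 : x ≤ q + 8
  · exact ⟨5 * q + 3 + (x - (q + 2)) / 2, q + 2 + 2 * ((x - (q + 2)) / 2),
      q + 2 + 2 * ((x - (q + 2)) / 2) + 1,
      Or.inr (Or.inr (Or.inr (Or.inr (Or.inr ⟨(x - (q + 2)) / 2, by omega⟩)))), by omega⟩
  by_cases h4 : x = 10 * q + 9
  · exact ⟨1, 0, 10 * q + 9, Or.inl (by omega), by omega⟩
  obtain ⟨j, r, hr, hj⟩ : ∃ j r, r < 9 ∧ 10 * q + 17 = x + 9 * j + r :=
    ⟨(10 * q + 17 - x) / 9, (10 * q + 17 - x) % 9, by omega, by omega⟩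
  by_cases h5 : r = 0
  · exact ⟨5 * j - 3, j, x, Or.inr (Or.inl ⟨j, by omega⟩), by omega⟩
  by_cases h6 : r = 8
  · exact ⟨5 * j - 2, x, x + 7, Or.inr (Or.inr (Or.inl ⟨j, by omega⟩)), by omega⟩
  by_cases h7 : r = 1
  · exact ⟨5 * j - 2, x - 7, x, Or.inr (Or.inr (Or.inl ⟨j, by omega⟩)), by omega⟩
  · exact ⟨5 * j - 2 + r / 2, 10 * q + 16 - 9 * j - 2 * (r / 2),
      10 * q + 16 - 9 * j - 2 * (r / 2) + 1,
      Or.inr (Or.inr (Or.inr (Or.inl ⟨j, r / 2, by omega⟩))), by omega⟩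

/-- every nonroot vertex has an edge to its parent -/
theorem eA_ex (q v : ℕ) (hq : 0 < q) (h0 : 0 < v) (hv : v < 5 * q + 6) :
    ∃ d u, eA q v d u := by
  by_cases h1 : v = 1
  · exact ⟨0, _, Or.inl ⟨h1, rfl, rfl⟩⟩
  by_cases h2 : v = 5 * q + 2
  · exact ⟨_, _, Or.inr (Or.inr (Or.inr (Or.inr (Or.inl ⟨h2, rfl, rfl⟩))))⟩
  by_cases h3 : 5 * q + 2 < v
  · exact ⟨_, _, Or.inr (Or.inr (Or.inr (Or.inr (Or.inr
      ⟨v - (5 * q + 3), by omega, by omega, rfl, rfl⟩))))⟩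
  obtain ⟨j, r, hr, hj⟩ : ∃ j r, r < 5 ∧ v + 3 = 5 * j + r :=
    ⟨(v + 3) / 5, (v + 3) % 5, by omega, by omega⟩
  by_cases h5 : r = 0
  · exact ⟨j, 10 * q + 17 - 9 * j, Or.inr (Or.inl ⟨j, by omega⟩)⟩
  by_cases h6 : r = 1
  · exact ⟨10 * q + 9 - 9 * j, 10 * q + 9 - 9 * j + 7, Or.inr (Or.inr (Or.inl ⟨j, by omega⟩))⟩
  · exact ⟨10 * q + 16 - 9 * j - 2 * (r - 1), 10 * q + 16 - 9 * j - 2 * (r - 1) + 1,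
      Or.inr (Or.inr (Or.inr (Or.inl ⟨j, r - 1, by omega⟩)))⟩

theorem pA_lt (q v : ℕ) (h : 0 < v) : pA q v < v := by
  unfold pA; split_ifs <;> omega

theorem nA_bd (q v x : ℕ) (h : nA q v x) : v < 5 * q + 6 ∧ x ≤ 10 * q + 10 := by
  rcases h with ⟨h1, h2⟩ | ⟨h1, h2⟩ | ⟨j, h1, h2, h3, h4⟩ | ⟨j, h1, h2, h3, h4⟩ |
    ⟨j, m, h1, h2, h3, h4, h5, h6⟩ | ⟨h1, h2⟩ | ⟨m, h1, h2, h3⟩ <;> omega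

/-- structured step lemma -/
theorem wA_step (q x : ℕ) (hq : 0 < q) (hx : x < 10 * q + 10) :
    ∃ d u, (eA q (wA q (x + 1)) d u ∧ x = d ∧ pA q (wA q (x + 1)) = wA q x) ∨
      (eA q (wA q x) d u ∧ x = u ∧ pA q (wA q x) = wA q (x + 1)) := by
  obtain ⟨v, d, u, he, h⟩ := eA_step q x hq hx
  have h1 := nA_wA q _ _ hq (eA_n1 q v d u hq he)
  have h2 := nA_wA q _ _ hq (eA_n2 q v d u hq he)
  have h3 := nA_wA q _ _ hq (eA_p q v d u hq he).1
  have h4 := nA_wA q _ _ hq (eA_p q v d u hq he).2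
  refine ⟨d, u, ?_⟩
  rcases h with rfl | rfl
  · left; rw [h1, h3]; exact ⟨he, rfl, rfl⟩
  · right; rw [h2, h4]; exact ⟨he, rfl, rfl⟩

theorem wA_n (q x : ℕ) (hq : 0 < q) (hx : x < 10 * q + 10) : nA q (wA q x) x := by
  obtain ⟨d, u, ⟨he, rfl, hp⟩ | ⟨he, rfl, hp⟩⟩ := wA_step q x hq hx
  · rw [← hp]; exact (eA_p q _ _ _ hq he).1
  · exact eA_n2 q _ _ _ hq he

theorem wA_lt (q x : ℕ) (hq : 0 < q) (hx : x < 10 * q + 10) : wA q x < 5 * q + 6 :=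
  (nA_bd q _ _ (wA_n q x hq hx)).1

theorem wA_inj (q x y : ℕ) (hq : 0 < q) (hx : x < 10 * q + 10) (hy : y < 10 * q + 10)
    (h : wA q x = wA q y) (hm : x % 5 = y % 5) : x = y :=
  nA_inj q _ x y hq hx hy (wA_n q x hq hx) (h ▸ wA_n q y hq hy) hm

theorem wA_edge (q x y : ℕ) (hq : 0 < q) (hx : x < 10 * q + 10) (hy : y < 10 * q + 10)
    (h1 : wA q x = wA q (y + 1)) (h2 : wA q (x + 1) = wA q y) (hm : x % 5 = y % 5) : False := by
  obtain ⟨d, u, ⟨he, hd, hp⟩ | ⟨he, hd, hp⟩⟩ := wA_step q x hq hx <;>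
  obtain ⟨d', u', ⟨he', hd', hp'⟩ | ⟨he', hd', hp'⟩⟩ := wA_step q y hq hy
  · have a := pA_lt q _ (eA_bd q _ _ _ he).1
    have b := pA_lt q _ (eA_bd q _ _ _ he').1
    omega
  · rw [h2] at he
    have := eA_mod q _ _ _ _ _ hq he he'
    omega
  · rw [h1] at he
    have := eA_mod q _ _ _ _ _ hq he' he
    omega
  · have a := pA_lt q _ (eA_bd q _ _ _ he).1
    have b := pA_lt q _ (eA_bd q _ _ _ he').1
    omega

theorem wA_surj (q v : ℕ) (hq : 0 < q) (hv : v < 5 * q + 6) :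
    ∃ x < 10 * q + 10, wA q x = v := by
  by_cases h0 : v = 0
  · exact ⟨0, by omega, by simp [wA, h0]⟩
  obtain ⟨d, u, h⟩ := eA_ex q v hq (by omega) hv
  have h4 := nA_bd q _ _ (eA_p q v d u hq h).2
  exact ⟨u, by omega, nA_wA q _ _ hq (eA_n2 q v d u hq h)⟩

/-- the tree -/
def gA (q : ℕ) : SimpleGraph (Fin (5 * q + 6)) where
  Adj a b := (0 < a.val ∧ pA q a = b.val) ∨ (0 < b.val ∧ pA q b = a.val)
  symm := ⟨fun _ _ h => h.symm⟩
  loopless := ⟨fun a h => by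
    rcases h with ⟨h, h'⟩ | ⟨h, h'⟩ <;>
    · have := pA_lt q _ h
      omega⟩

theorem gA_tree (q : ℕ) : (gA q).IsTree := by
  have hconn : (gA q).Connected := by
    have key : ∀ m (h : m < 5 * q + 6), (gA q).Reachable ⟨m, h⟩ ⟨0, by omega⟩ := by
      intro m
      induction m using Nat.strong_induction_on with
      | _ m ih =>
        intro h
        by_cases h0 : m = 0
        · subst h0; exact Reachable.refl _
        · have hl := pA_lt q m (by omega)
          have hadj : (gA q).Adj ⟨m, h⟩ ⟨pA q m, by omega⟩ := Or.inl ⟨by simp; omega, rfl⟩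
          exact hadj.reachable.trans (ih _ hl _)
    haveI : Nonempty (Fin (5 * q + 6)) := ⟨⟨0, by omega⟩⟩
    exact Connected.mk fun a b => (key a.1 a.2).trans (key b.1 b.2).symm
  rw [isTree_iff_connected_and_card]
  refine ⟨hconn, le_antisymm ?_ hconn.card_vert_le_card_edgeSet_add_one⟩
  have hsub : (gA q).edgeSet ⊆ Set.range (fun i : Fin (5 * q + 5) =>
      s((⟨i.1 + 1, by omega⟩ : Fin (5 * q + 6)),
        (⟨pA q (i.1 + 1), by have := pA_lt q (i.1 + 1) (by omega); omega⟩ : Fin (5 * q + 6)))) := by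
    intro e
    induction e using Sym2.ind with
    | _ a b =>
      intro h
      rw [mem_edgeSet] at h
      rcases h with ⟨h, h'⟩ | ⟨h, h'⟩
      · refine ⟨⟨a.1 - 1, by omega⟩, ?_⟩
        have e1 : a.1 - 1 + 1 = a.1 := by omega
        simp only [e1, h']
      · refine ⟨⟨b.1 - 1, by omega⟩, ?_⟩
        have e1 : b.1 - 1 + 1 = b.1 := by omega
        simp only [e1, h']
        exact Sym2.eq_swap
  have h1 := Nat.card_mono (Set.toFinite _) hsub
  have h2 := Finite.card_range_le (fun i : Fin (5 * q + 5) =>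
      s((⟨i.1 + 1, by omega⟩ : Fin (5 * q + 6)),
        (⟨pA q (i.1 + 1), by have := pA_lt q (i.1 + 1) (by omega); omega⟩ : Fin (5 * q + 6))))
  have h3 := h1.trans h2
  simp only [Nat.card_eq_fintype_card, Fintype.card_fin] at h3 ⊢
  omega

theorem wA_succ (q t : ℕ) (hq : 0 < q) :
    wA q ((t + 1) % (10 * q + 10)) = wA q (t % (10 * q + 10) + 1) := by
  have hlt := Nat.mod_lt t (show 10 * q + 10 > 0 by omega)
  rw [← Nat.mod_add_mod]
  by_cases h : t % (10 * q + 10) + 1 = 10 * q + 10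
  · rw [h, Nat.mod_self, nA_wA q 0 0 hq (Or.inl (by omega)),
      nA_wA q (10 * q + 10) 0 hq (Or.inl (by omega))]
  · rw [Nat.mod_eq_of_lt (by omega)]

theorem modA (q t : ℕ) : (t % (10 * q + 10)) % 5 = t % 5 :=
  Nat.mod_mod_of_dvd _ ⟨2 * q + 2, by ring⟩

/-- for every positive integer `q` there is a tree on `n = 5q + 6`
vertices admitting a feasible agency without parking with time horizon
`T = 2n - 2 = 10q + 10` and `k = 2q + 2 = T/5` agents. -/
theorem stmt8 (q : ℕ) (hq : 0 < q) :
    ∃ G : SimpleGraph (Fin (5 * q + 6)), G.IsTree ∧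
      ∃ a : Fin (2 * q + 2) → ℕ → Fin (5 * q + 6),
        FeasibleAgencyNP G (2 * q + 2) (10 * q + 10) a := by
  have hlt : ∀ t, t % (10 * q + 10) < 10 * q + 10 := fun t => Nat.mod_lt t (by omega)
  refine ⟨gA q, gA_tree q, fun i t => ⟨wA q ((t + 5 * i.1) % (10 * q + 10)),
    wA_lt q _ hq (hlt _)⟩, ?_, ?_⟩
  · intro i
    refine ⟨?_, ?_, ?_⟩
    · intro t _
      have hs := wA_succ q (t + 5 * i.1) hq
      rw [show t + 5 * i.1 + 1 = t + 1 + 5 * i.1 by ring] at hs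
      show (0 < wA q _ ∧ pA q (wA q _) = wA q _) ∨ (0 < wA q _ ∧ pA q (wA q _) = wA q _)
      simp only [hs]
      obtain ⟨d, u, ⟨he, hd, hp⟩ | ⟨he, hd, hp⟩⟩ := wA_step q _ hq (hlt (t + 5 * i.1))
      · exact Or.inr ⟨(eA_bd q _ _ _ he).1, hp⟩
      · exact Or.inl ⟨(eA_bd q _ _ _ he).1, hp⟩
    · intro v
      obtain ⟨x, hx, hv⟩ := wA_surj q v.1 hq v.2
      have hi := i.2
      by_cases hc : 5 * i.1 ≤ x
      · refine ⟨x - 5 * i.1, by omega, Fin.ext ?_⟩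
        show wA q _ = _
        rw [Nat.sub_add_cancel hc, Nat.mod_eq_of_lt hx, hv]
      · refine ⟨x + (10 * q + 10) - 5 * i.1, by omega, Fin.ext ?_⟩
        show wA q _ = _
        rw [Nat.sub_add_cancel (by omega), Nat.add_mod_right, Nat.mod_eq_of_lt hx, hv]
    · apply Fin.ext
      show wA q _ = wA q _
      rw [Nat.zero_add, Nat.add_mod_left]
  · intro i j hij
    have hm : ∀ t, ((t + 5 * i.1) % (10 * q + 10)) % 5 = ((t + 5 * j.1) % (10 * q + 10)) % 5 := by
      intro t
      rw [modA, modA]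
      omega
    refine ⟨?_, ?_⟩
    · intro t _ h
      have h' := wA_inj q _ _ hq (hlt _) (hlt _) (Fin.mk.inj h) (hm t)
      have h2 : 5 * i.1 ≡ 5 * j.1 [MOD (10 * q + 10)] := Nat.ModEq.add_left_cancel' t h'
      have h3 := Nat.ModEq.eq_of_lt_of_lt h2 (by omega) (by omega)
      exact hij (Fin.ext (by omega))
    · rintro t _ ⟨h1, h2, _⟩
      have h1 := Fin.mk.inj h1
      have h2 := Fin.mk.inj h2
      have hs := wA_succ q (t + 5 * i.1) hq
      rw [show t + 5 * i.1 + 1 = t + 1 + 5 * i.1 by ring] at hs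
      have hs' := wA_succ q (t + 5 * j.1) hq
      rw [show t + 5 * j.1 + 1 = t + 1 + 5 * j.1 by ring] at hs'
      rw [hs'] at h1
      rw [hs] at h2
      exact wA_edge q _ _ hq (hlt _) (hlt _) h1 h2 (hm t)
end

section
/- If G is a 3-regular 3-edge-connected finite simple graph on n vertices, then G admits a feasible agency with time horizon T = 2n and k = n/2 agents (so T/k = 4 and the strength is α = max(n/k, T/n) = 2). -/
open SimpleGraph

/-- The successor map on time slots `(v, i)`: `i` counts the time since `v` was entered. -/
def slotNext {V : Type*} [DecidableEq V] (σ : Equiv.Perm V) (m : V → V) (S : Finset V)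
    (o : V → ℕ) (p : V × ℕ) : V × ℕ :=
  if p.1 ∈ S then (if p.2 = 0 then (m p.1, 3) else (σ p.1, 0))
  else if p.2 + 1 < o p.1 then (p.1, p.2 + 1) else (σ p.1, 0)

/-- Which slots are actually used. -/
def IsSlot {V : Type*} [DecidableEq V] (S : Finset V)
    (o : V → ℕ) (p : V × ℕ) : Prop :=
  if p.1 ∈ S then (p.2 = 0 ∨ p.2 = 3) else p.2 < o p.1

instance {V : Type*} [DecidableEq V] (S : Finset V)
    (o : V → ℕ) : DecidablePred (IsSlot S o) := fun p => by
  unfold IsSlot; infer_instance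

theorem slotNext_cases {V : Type*} [DecidableEq V]
    (σ : Equiv.Perm V) (m : V → V) (S : Finset V) (o : V → ℕ) (p : V × ℕ) (hp : IsSlot S o p) :
    (p.1 ∈ S ∧ p.2 = 0 ∧ slotNext σ m S o p = (m p.1, 3)) ∨
    (p.1 ∈ S ∧ p.2 = 3 ∧ slotNext σ m S o p = (σ p.1, 0)) ∨
    (p.1 ∉ S ∧ p.2 + 1 < o p.1 ∧ slotNext σ m S o p = (p.1, p.2 + 1)) ∨
    (p.1 ∉ S ∧ p.2 + 1 = o p.1 ∧ slotNext σ m S o p = (σ p.1, 0)) := by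
  unfold IsSlot at hp
  unfold slotNext
  split_ifs at * with h1 h2 h3
  · tauto
  · tauto
  · tauto
  · have : p.2 + 1 = o p.1 := by omega
    tauto

theorem slotNext_inj {V : Type*} [DecidableEq V]
    (σ : Equiv.Perm V) (m : V → V) (S : Finset V) (o : V → ℕ)
    (hmm : ∀ v, m (m v) = v) (hS : ∀ v ∈ S, m v ∈ S) (p q : V × ℕ)
    (hp : IsSlot S o p) (hq : IsSlot S o q) (h : slotNext σ m S o p = slotNext σ m S o q) :
    p = q := by
  have hminj : ∀ v w, m v = m w → v = w := fun v w h => by rw [← hmm v, h, hmm]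
  obtain ⟨v, i⟩ := p
  obtain ⟨w, j⟩ := q
  have hS' := hS v
  have hS'' := hS w
  rcases slotNext_cases σ m S o _ hp with ⟨a1, a2, a3⟩ | ⟨a1, a2, a3⟩ | ⟨a1, a2, a3⟩ | ⟨a1, a2, a3⟩ <;>
  rcases slotNext_cases σ m S o _ hq with ⟨b1, b2, b3⟩ | ⟨b1, b2, b3⟩ | ⟨b1, b2, b3⟩ | ⟨b1, b2, b3⟩ <;>
  rw [a3, b3] at h <;> simp only [Prod.mk.injEq, EmbeddingLike.apply_eq_iff_eq] at h a1 a2 b1 b2 ⊢ <;>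
  grind

theorem slotNext_edge {V : Type*} [DecidableEq V]
    (σ : Equiv.Perm V) (m : V → V) (S : Finset V) (o : V → ℕ) (r : V → ZMod 4)
    (hσ2 : ∀ v, σ (σ v) ≠ v)
    (hmm : ∀ v, m (m v) = v) (hmσ : ∀ v, m v ≠ σ v)
    (hrS : ∀ v ∈ S, r (m v) = r v + 2) (p q : V × ℕ)
    (hp : IsSlot S o p) (hq : IsSlot S o q) (h : r p.1 + p.2 = r q.1 + q.2)
    (h1 : p.1 = (slotNext σ m S o q).1) (h2 : (slotNext σ m S o p).1 = q.1) :
    p.1 = (slotNext σ m S o p).1 := by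
  have hms : ∀ u, σ (m u) ≠ u := fun u hu => hmσ (m u) (by rw [hmm, hu])
  have h20 : (2 : ZMod 4) ≠ 0 := by decide
  obtain ⟨v, i⟩ := p
  obtain ⟨w, j⟩ := q
  rcases slotNext_cases σ m S o _ hp with ⟨a1, a2, a3⟩ | ⟨a1, a2, a3⟩ | ⟨a1, a2, a3⟩ | ⟨a1, a2, a3⟩ <;>
  rcases slotNext_cases σ m S o _ hq with ⟨b1, b2, b3⟩ | ⟨b1, b2, b3⟩ | ⟨b1, b2, b3⟩ | ⟨b1, b2, b3⟩ <;>
  rw [b3] at h1 <;> rw [a3] at h2 ⊢ <;> simp only at h1 h2 a1 a2 b1 b2 ⊢ <;>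
  grind

theorem final_walk {V : Type*} [Fintype V] [DecidableEq V] [Nonempty V] (G : SimpleGraph V)
    (σ τ : Equiv.Perm V) (m : V → V) (S : Finset V) (o : V → ℕ) (r : V → ZMod 4)
    (hσ : ∀ v, G.Adj v (σ v)) (hσ2 : ∀ v, σ (σ v) ≠ v) (hm : ∀ v, G.Adj v (m v))
    (hmm : ∀ v, m (m v) = v) (hmσ : ∀ v, m v ≠ σ v) (hS : ∀ v ∈ S, m v ∈ S)
    (ho1 : ∀ v, 1 ≤ o v) (ho4 : ∀ v, o v ≤ 4) (hoS : ∀ v ∈ S, o v = 4)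
    (hr : ∀ v, r (σ v) = r v + o v) (hrS : ∀ v ∈ S, r (m v) = r v + 2)
    (hτ : ∀ v, τ v = σ (if v ∈ S then m v else v))
    (htrans : ∀ x y, τ.SameCycle x y)
    (hcount : ∑ v ∈ Finset.univ.filter (· ∉ S), o v + 2 * S.card = 2 * Fintype.card V) :
    ∃ a : Fin (Fintype.card V / 2) → ℕ → V,
      FeasibleAgency G (Fintype.card V / 2) (2 * Fintype.card V) a := by
  classical
  set n := Fintype.card V with hn
  let A : Finset (V × ℕ) := (Finset.univ ×ˢ Finset.range 4).filter (IsSlot S o)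
  have hA : ∀ p, p ∈ A ↔ IsSlot S o p := by
    rintro ⟨v, i⟩
    simp only [A, Finset.mem_filter, Finset.mem_product, Finset.mem_univ, true_and,
      Finset.mem_range, and_iff_right_iff_imp]
    intro h
    unfold IsSlot at h
    have := ho4 v
    split_ifs at h
    · simp at h; omega
    · simp at h; omega
  have hAcard : A.card = 2 * n := by
    rw [← hcount]
    have h1 : A.card = ∑ v : V, (A.filter (fun p => p.1 = v)).card :=
      Finset.card_eq_sum_card_fiberwise (fun _ _ => Finset.mem_univ _)
    have h2 : ∀ v, (A.filter (fun p => p.1 = v)).card = if v ∈ S then 2 else o v := by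
      intro v
      split_ifs with hv
      · have : A.filter (fun p => p.1 = v) = {(v, 0), (v, 3)} := by
          ext ⟨w, i⟩
          simp only [Finset.mem_filter, hA, IsSlot, Finset.mem_insert, Finset.mem_singleton,
            Prod.mk.injEq]
          constructor
          · rintro ⟨h, rfl⟩
            simp [hv] at h
            tauto
          · rintro (⟨rfl, rfl⟩ | ⟨rfl, rfl⟩) <;> simp [hv]
        rw [this, Finset.card_pair]
        simp
      · have : A.filter (fun p => p.1 = v) = (Finset.range (o v)).image (fun i => (v, i)) := by
          ext ⟨w, i⟩
          simp only [Finset.mem_filter, hA, IsSlot, Finset.mem_image, Finset.mem_range,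
            Prod.mk.injEq]
          constructor
          · rintro ⟨h, rfl⟩
            simp [hv] at h
            exact ⟨i, h, rfl, rfl⟩
          · rintro ⟨j, hj, rfl, rfl⟩
            simp [hv, hj]
        rw [this, Finset.card_image_of_injective, Finset.card_range]
        intro a b h
        simpa using h
    rw [h1, Finset.sum_congr rfl (fun v _ => h2 v), Finset.sum_ite, add_comm]
    simp [mul_comm]
  let f := slotNext σ m S o
  have hmS : ∀ v, m v ∈ S ↔ v ∈ S := fun v => ⟨fun h => by simpa [hmm] using hS _ h, hS v⟩
  have hfA : ∀ p ∈ A, f p ∈ A := by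
    rintro ⟨v, i⟩ hp
    rw [hA] at hp ⊢
    have h0 : IsSlot S o (σ v, 0) := by
      unfold IsSlot
      have := ho1 (σ v)
      split_ifs
      · simp
      · simp; omega
    simp only [f, slotNext]
    split_ifs with h1 h2 h3
    · simp [IsSlot, hmS, h1]
    · exact h0
    · simp [IsSlot, h1, h3]
    · exact h0
  have hminj : ∀ v w, m v = m w → v = w := fun v w h => by rw [← hmm v, h, hmm]
  have hinj : ∀ p ∈ A, ∀ q ∈ A, f p = f q → p = q := fun p hp q hq h =>
    slotNext_inj σ m S o hmm hS p q ((hA p).1 hp) ((hA q).1 hq) h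
  let g : A → A := fun p => ⟨f p, hfA p p.2⟩
  have hg : Function.Injective g := by
    rintro ⟨p, hp⟩ ⟨q, hq⟩ h
    simp only [g, Subtype.mk.injEq] at h
    exact Subtype.ext (hinj p hp q hq h)
  let π : Equiv.Perm A := Equiv.ofBijective g (Finite.injective_iff_bijective.1 hg)
  have hπ : ∀ p : A, ((π p : A) : V × ℕ) = f p := fun p => rfl
  have hE : ∀ v, (v, 0) ∈ A := by
    intro v
    rw [hA]
    unfold IsSlot
    have := ho1 v
    split_ifs
    · simp
    · simp; omega
  -- every slot is reached from an entrance slot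
  have hent : ∀ v i, ∀ h : (v, i) ∈ A, v ∉ S → π.SameCycle ⟨(v, 0), hE v⟩ ⟨(v, i), h⟩ := by
    intro v i
    induction i with
    | zero => intro h _; exact Equiv.Perm.SameCycle.refl _ _
    | succ i ih =>
      intro h hv
      have hs : i + 1 < o v := by simpa [hA, IsSlot, hv] using h
      have h' : (v, i) ∈ A := by
        rw [hA]; simp [IsSlot, hv]; omega
      refine (ih h' hv).trans ⟨1, ?_⟩
      apply Subtype.ext
      simp only [zpow_one, hπ]
      simp [f, slotNext, hv, hs]
  have hX : ∀ v, (v, o v - 1) ∈ A := by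
    intro v
    rw [hA]
    unfold IsSlot
    have := ho1 v
    split_ifs with h
    · simp [hoS v h]
    · simp; omega
  have hXE : ∀ v, π.SameCycle ⟨(v, o v - 1), hX v⟩ ⟨(σ v, 0), hE _⟩ := by
    intro v
    refine ⟨1, Subtype.ext ?_⟩
    simp only [zpow_one, hπ]
    have := ho1 v
    by_cases hv : v ∈ S
    · simp [f, slotNext, hv, hoS v hv]
    · have : ¬ (o v - 1 + 1 < o v) := by omega
      simp [f, slotNext, hv, this]
  have hEX : ∀ v, ∀ hv : v ∈ S, π.SameCycle ⟨(v, 0), hE v⟩ ⟨(m v, o (m v) - 1), hX _⟩ := by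
    intro v hv
    refine ⟨1, Subtype.ext ?_⟩
    simp only [zpow_one, hπ]
    simp [f, slotNext, hv, hoS _ (hS v hv)]
  have hstep : ∀ v, π.SameCycle ⟨(v, 0), hE v⟩ ⟨(τ v, 0), hE _⟩ := by
    intro v
    by_cases hv : v ∈ S
    · have := (hEX v hv).trans (hXE (m v))
      convert this using 3
      simp [hτ, hv]
    · have := (hent v _ (hX v) hv).trans (hXE v)
      convert this using 3
      simp [hτ, hv]
  have hEE : ∀ v w, π.SameCycle ⟨(v, 0), hE v⟩ ⟨(w, 0), hE w⟩ := by
    intro v w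
    obtain ⟨k, rfl⟩ := (htrans v w).exists_nat_pow_eq
    induction k with
    | zero => exact Equiv.Perm.SameCycle.refl _ _
    | succ k ih =>
      have := ih.trans (hstep _)
      convert this using 3
      rw [pow_succ', Equiv.Perm.mul_apply]
  have hall : ∀ p : A, ∃ v, π.SameCycle ⟨(v, 0), hE v⟩ p := by
    rintro ⟨⟨v, i⟩, hp⟩
    by_cases hv : v ∈ S
    · have h1 : i = 0 ∨ i = 3 := by simpa [hA, IsSlot, hv] using hp
      rcases h1 with rfl | rfl
      · exact ⟨v, Equiv.Perm.SameCycle.refl _ _⟩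
      · refine ⟨m v, ?_⟩
        have := hEX (m v) (hS v hv)
        convert this using 3
        · rw [hmm]
        · rw [hmm, hoS v hv]
    · exact ⟨v, hent v i hp hv⟩
  have hcyc : π.IsCycleOn ((Finset.univ : Finset A) : Set A) := by
    refine ⟨by simpa using π.bijective.bijOn_univ, fun p _ q _ => ?_⟩
    obtain ⟨v, hv⟩ := hall p
    obtain ⟨w, hw⟩ := hall q
    exact (hv.symm.trans (hEE v w)).trans hw
  have hcard : (Finset.univ : Finset A).card = 2 * n := by simp [hAcard]
  obtain ⟨v0⟩ := ‹Nonempty V›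
  let q0 : A := ⟨(v0, 0), hE v0⟩
  let W : ℕ → V × ℕ := fun t => ((π ^ t) q0 : A)
  have hWA : ∀ t, W t ∈ A := fun t => ((π ^ t) q0 : A).2
  have hWs : ∀ t, W (t + 1) = f (W t) := by
    intro t
    simp only [W, pow_succ', Equiv.Perm.mul_apply, hπ]
  have hWeq : ∀ s t, W s = W t ↔ s ≡ t [MOD 2 * n] := by
    intro s t
    have := hcyc.pow_apply_eq_pow_apply (Finset.mem_univ q0) (m := s) (n := t)
    rw [hcard] at this
    rw [← this]
    exact Subtype.ext_iff.symm
  have hWall : ∀ p ∈ A, ∀ s, ∃ t ≤ 2 * n, W (t + s) = p := by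
    intro p hp s
    obtain ⟨k, hk, h⟩ := hcyc.exists_pow_eq (Finset.mem_univ ((π ^ s) q0)) (Finset.mem_univ ⟨p, hp⟩)
    rw [hcard] at hk
    refine ⟨k, hk.le, ?_⟩
    simp only [W, pow_add, Equiv.Perm.mul_apply, h]
  -- residues
  let ρ : V × ℕ → ZMod 4 := fun p => r p.1 + p.2
  have hρ : ∀ p ∈ A, ρ (f p) = ρ p + 1 := by
    rintro ⟨v, i⟩ hp
    rw [hA] at hp
    simp only [f, slotNext, ρ, IsSlot] at *
    have h41 : (4 : ZMod 4) = 0 := rfl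
    have h23 : (2 : ZMod 4) + 3 = 1 := rfl
    have h31 : (3 : ZMod 4) + 1 = 0 := rfl
    split_ifs at * with h1 h2 h3
    · subst h2
      simp [hrS v h1, add_assoc, h23]
    · have : i = 3 := by tauto
      subst this
      simp [hr, hoS v h1, add_assoc, h31, h41]
    · push_cast; ring
    · have : o v = i + 1 := by omega
      rw [hr, this]; push_cast; ring
  have hρinj : ∀ p ∈ A, ∀ q ∈ A, p.1 = q.1 → ρ p = ρ q → p = q := by
    rintro ⟨v, i⟩ hp ⟨w, j⟩ hq h h'
    dsimp only at h
    subst h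
    have hi : i < 4 := by simp [A] at hp; exact hp.1
    have hj : j < 4 := by simp [A] at hq; exact hq.1
    simp only [ρ, add_right_inj] at h'
    rw [ZMod.natCast_eq_natCast_iff'] at h'
    congr 1
    omega
  have hWρ : ∀ t, ρ (W t) = ρ (W 0) + t := by
    intro t
    induction t with
    | zero => simp
    | succ t ih => rw [hWs, hρ _ (hWA t), ih]; push_cast; ring
  have hedge : ∀ p ∈ A, ∀ q ∈ A, ρ p = ρ q → p.1 = (f q).1 → (f p).1 = q.1 → p.1 = (f p).1 :=
    fun p hp q hq h h1 h2 =>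
    slotNext_edge σ m S o r hσ2 hmm hmσ hrS p q ((hA p).1 hp) ((hA q).1 hq) h h1 h2
  have hadj : ∀ p, p.1 = (f p).1 ∨ G.Adj p.1 (f p).1 := by
    rintro ⟨v, i⟩
    simp only [f, slotNext]
    split_ifs
    · exact Or.inr (hm v)
    · exact Or.inr (hσ v)
    · exact Or.inl rfl
    · exact Or.inr (hσ v)
  have hres : ∀ i j t : ℕ, ρ (W (t + 4 * i)) = ρ (W (t + 4 * j)) := by
    intro i j t
    rw [hWρ, hWρ (t + 4 * j)]
    have h41 : (4 : ZMod 4) = 0 := rfl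
    push_cast
    simp [h41]
  refine ⟨fun i t => (W (t + 4 * i)).1, fun i => ⟨?_, ?_, ?_⟩, fun i j hij => ⟨?_, ?_⟩⟩
  · intro t _
    have : t + 1 + 4 * (i : ℕ) = (t + 4 * i) + 1 := by ring
    simp only [this, hWs]
    exact hadj _
  · intro v
    obtain ⟨t, ht, h⟩ := hWall (v, 0) (hE v) (4 * i)
    exact ⟨t, ht, by simp only [h]⟩
  · have : W (0 + 4 * i) = W (2 * n + 4 * i) := by
      rw [hWeq]
      simp [Nat.ModEq]
    simp only [this]
  · intro t _ h
    have := hρinj _ (hWA _) _ (hWA _) h (hres i j t)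
    rw [hWeq] at this
    have h3 : 4 * (i : ℕ) ≡ 4 * j [MOD 2 * n] := Nat.ModEq.add_left_cancel' t this
    have hi := i.2
    have hj := j.2
    have h4 := Nat.ModEq.eq_of_lt_of_lt h3 (by omega) (by omega)
    apply hij
    ext
    omega
  · rintro t _ ⟨h1, h2, h3⟩
    have e : ∀ i : ℕ, t + 1 + 4 * (i : ℕ) = (t + 4 * i) + 1 := fun i => by ring
    simp only [e, hWs] at h1 h2 h3
    exact h3 (hedge _ (hWA _) _ (hWA _) (hres i j t) h1 h2)


/-- Composing with a transposition of points of different cycles merges these cycles. -/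
theorem merge_cycles {V : Type*} [Finite V] [DecidableEq V] (τ : Equiv.Perm V) (a b : V)
    (hab : ¬ τ.SameCycle a b) :
    (τ * Equiv.swap a b).SameCycle a b ∧
    ∀ x y, τ.SameCycle x y → (τ * Equiv.swap a b).SameCycle x y := by
  set τ' := τ * Equiv.swap a b with hτ'
  have ha : τ' a = τ b := by simp [hτ']
  have hb : τ' b = τ a := by simp [hτ']
  have hx : ∀ x, x ≠ a → x ≠ b → τ' x = τ x := by
    intro x h1 h2
    simp [hτ', Equiv.swap_apply_of_ne_of_ne h1 h2]
  have key : τ'.SameCycle a b := by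
    by_contra hcon
    have h1 : ∀ k : ℕ, τ'.SameCycle a ((τ ^ k) (τ b)) := by
      intro k
      induction k with
      | zero => simpa [ha] using (Equiv.Perm.sameCycle_apply_right (f := τ') (x := a) (y := a)).2
                  (Equiv.Perm.SameCycle.refl _ _)
      | succ k ih =>
        have e : (τ ^ (k + 1)) (τ b) = τ ((τ ^ k) (τ b)) := by
          rw [pow_succ', Equiv.Perm.mul_apply]
        have n1 : (τ ^ k) (τ b) ≠ a := by
          intro h
          apply hab
          rw [← h, Equiv.Perm.sameCycle_pow_left, Equiv.Perm.sameCycle_apply_left]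
        have n2 : (τ ^ k) (τ b) ≠ b := by
          intro h
          rw [h] at ih
          exact hcon ih
        rw [e, ← hx _ n1 n2, Equiv.Perm.sameCycle_apply_right]
        exact ih
    have h2 : τ.SameCycle (τ b) b := by
      rw [Equiv.Perm.sameCycle_apply_left]
    obtain ⟨k, hk⟩ := h2.exists_nat_pow_eq
    have := h1 k
    rw [hk] at this
    exact hcon this
  refine ⟨key, ?_⟩
  have step : ∀ x, τ'.SameCycle x (τ x) := by
    intro x
    by_cases h1 : x = a
    · subst h1
      rw [← hb, Equiv.Perm.sameCycle_apply_right]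
      exact key
    by_cases h2 : x = b
    · subst h2
      rw [← ha, Equiv.Perm.sameCycle_apply_right]
      exact key.symm
    rw [← hx x h1 h2, Equiv.Perm.sameCycle_apply_right]
  intro x y h
  obtain ⟨k, rfl⟩ := h.exists_nat_pow_eq
  clear h
  induction k with
  | zero => exact Equiv.Perm.SameCycle.refl _ _
  | succ k ih =>
    rw [pow_succ', Equiv.Perm.mul_apply]
    exact ih.trans (step _)

/-- The number of cycles (including fixed points) of a permutation. -/
noncomputable def numCyc {V : Type*} (τ : Equiv.Perm V) : ℕ :=
  Nat.card (Quotient (Equiv.Perm.SameCycle.setoid τ))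

theorem numCyc_lt {V : Type*} [Finite V] (τ τ' : Equiv.Perm V) (a b : V)
    (h : ∀ x y, τ.SameCycle x y → τ'.SameCycle x y) (hab : ¬ τ.SameCycle a b)
    (hab' : τ'.SameCycle a b) : numCyc τ' < numCyc τ := by
  unfold numCyc
  let F : Quotient (Equiv.Perm.SameCycle.setoid τ) → Quotient (Equiv.Perm.SameCycle.setoid τ') :=
    Quotient.map id (fun x y hxy => h x y hxy)
  have hs : Function.Surjective F := by
    intro q
    induction q using Quotient.inductionOn with
    | h x => exact ⟨Quotient.mk _ x, rfl⟩
  refine lt_of_le_of_ne (Nat.card_le_card_of_surjective F hs) ?_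
  intro he
  have hb : Function.Bijective F := by
    rw [Nat.bijective_iff_surjective_and_card]
    exact ⟨hs, he.symm⟩
  apply hab
  have : F (Quotient.mk _ a) = F (Quotient.mk _ b) := Quotient.sound hab'
  exact Quotient.exact (hb.1 this)

/-- Invariant for the construction of the tree of matching edges. -/
def TreeInv {V : Type*} [DecidableEq V] (σ : Equiv.Perm V) (m : V → V)
    (S : Finset V) (τ : Equiv.Perm V) : Prop :=
  (∀ v ∈ S, m v ∈ S) ∧ (∀ v, τ v = σ (if v ∈ S then m v else v)) ∧
  (∀ x y, σ.SameCycle x y → τ.SameCycle x y) ∧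
  S.card + 2 * numCyc τ ≤ 2 * numCyc σ ∧
  ∀ r0 : V → ZMod 4, ∃ r : V → ZMod 4, (∀ v, r (σ v) - r v = r0 (σ v) - r0 v) ∧
    ∀ v ∈ S, r (m v) = r v + 2

theorem tree_step {V : Type*} [Finite V] [DecidableEq V] (G : SimpleGraph V) (hG : G.Connected)
    (σ : Equiv.Perm V) (m : V → V) (hmm : ∀ v, m (m v) = v)
    (hnb : ∀ a b, G.Adj a b → b = σ a ∨ a = σ b ∨ b = m a)
    (S : Finset V) (τ : Equiv.Perm V) (hI : TreeInv σ m S τ) (hne : ¬ ∀ x y, τ.SameCycle x y) :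
    ∃ S' τ', TreeInv σ m S' τ' ∧ numCyc τ' < numCyc τ := by
  obtain ⟨hS, hτ, hsame, hcard, hr⟩ := hI
  have hστ : ∀ v, τ.SameCycle v (σ v) := fun v => hsame _ _ ((Equiv.Perm.sameCycle_apply_right).2
    (Equiv.Perm.SameCycle.refl _ _))
  have hmτ : ∀ v ∈ S, τ.SameCycle v (m v) := by
    intro v hv
    have h1 : τ.SameCycle v (τ v) := (Equiv.Perm.sameCycle_apply_right).2
      (Equiv.Perm.SameCycle.refl _ _)
    rw [hτ, if_pos hv] at h1
    exact h1.trans (hστ (m v)).symm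
  obtain ⟨a, b, hadj, hab⟩ : ∃ a b, G.Adj a b ∧ ¬ τ.SameCycle a b := by
    by_contra hcon
    push Not at hcon
    apply hne
    intro x y
    obtain ⟨p⟩ := hG.preconnected x y
    induction p with
    | nil => exact Equiv.Perm.SameCycle.refl _ _
    | cons h p ih => exact (hcon _ _ h).trans ih
  have hb : b = m a := by
    rcases hnb a b hadj with h | h | h
    · exact absurd (h ▸ hστ a) hab
    · exact absurd (h ▸ (hστ b).symm) hab
    · exact h
  have ha : a = m b := by rw [hb, hmm]
  have haS : a ∉ S := fun h => hab (hb ▸ hmτ a h)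
  have hbS : b ∉ S := fun h => haS (ha ▸ hS b h)
  have hne' : a ≠ b := hadj.ne
  obtain ⟨hm1, hm2⟩ := merge_cycles τ a b hab
  have hlt := numCyc_lt τ (τ * Equiv.swap a b) a b hm2 hab hm1
  refine ⟨insert a (insert b S), τ * Equiv.swap a b, ⟨?_, ?_, ?_, ?_, ?_⟩, hlt⟩
  · intro v hv
    simp only [Finset.mem_insert] at hv ⊢
    rcases hv with rfl | rfl | hv
    · exact Or.inr (Or.inl hb.symm)
    · exact Or.inl ha.symm
    · exact Or.inr (Or.inr (hS v hv))
  · intro v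
    by_cases h1 : v = a
    · subst h1
      simp [hτ, hbS, ← hb]
    by_cases h2 : v = b
    · subst h2
      simp [hτ, haS, ← ha]
    simp [Equiv.swap_apply_of_ne_of_ne h1 h2, hτ, h1, h2]
  · exact fun x y h => hm2 _ _ (hsame x y h)
  · rw [Finset.card_insert_of_notMem (by simp [hne', haS]), Finset.card_insert_of_notMem hbS]
    omega
  · intro r0
    obtain ⟨r, h1, h2⟩ := hr r0
    classical
    refine ⟨fun v => if τ.SameCycle a v then r v + (r b - r a - 2) else r v, ?_, ?_⟩
    · intro v
      have : τ.SameCycle a (σ v) ↔ τ.SameCycle a v :=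
        ⟨fun h => h.trans (hστ v).symm, fun h => h.trans (hστ v)⟩
      simp only [this]
      rw [← h1]
      split_ifs <;> ring
    · have h4 : (4 : ZMod 4) = 0 := rfl
      intro v hv
      simp only [Finset.mem_insert] at hv
      rcases hv with rfl | rfl | hv
      · rw [← hb]
        simp only [Equiv.Perm.SameCycle.refl, if_true, hab, if_false]
        ring
      · rw [← ha]
        simp only [Equiv.Perm.SameCycle.refl, if_true, hab, if_false]
        linear_combination -h4
      · have : τ.SameCycle a (m v) ↔ τ.SameCycle a v :=
          ⟨fun h => h.trans (hmτ v hv).symm, fun h => h.trans (hmτ v hv)⟩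
        simp only [this, h2 v hv]
        split_ifs <;> ring

theorem tree_exists {V : Type*} [Finite V] [DecidableEq V] (G : SimpleGraph V) (hG : G.Connected)
    (σ : Equiv.Perm V) (m : V → V) (hmm : ∀ v, m (m v) = v)
    (hnb : ∀ a b, G.Adj a b → b = σ a ∨ a = σ b ∨ b = m a) :
    ∃ S τ, TreeInv σ m S τ ∧ ∀ x y, τ.SameCycle x y := by
  have base : TreeInv σ m ∅ σ := by
    refine ⟨by simp, by simp, fun _ _ h => h, by simp, fun r0 => ⟨r0, by simp, by simp⟩⟩
  have : ∀ N, ∀ S τ, TreeInv σ m S τ → numCyc τ = N →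
      ∃ S τ, TreeInv σ m S τ ∧ ∀ x y, τ.SameCycle x y := by
    intro N
    induction N using Nat.strong_induction_on with
    | _ N ih =>
      intro S τ hI hN
      by_cases h : ∀ x y, τ.SameCycle x y
      · exact ⟨S, τ, hI, h⟩
      · obtain ⟨S', τ', hI', hlt⟩ := tree_step G hG σ m hmm hnb S τ hI h
        exact ih _ (hN ▸ hlt) S' τ' hI' rfl
  exact this _ ∅ σ base rfl

/-- Intermediate values of sums. -/
theorem sum_between {ι : Type*} (s : Finset ι) (l u : ι → ℕ) (hlu : ∀ i ∈ s, l i ≤ u i) :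
    ∀ N, ∑ i ∈ s, l i ≤ N → N ≤ ∑ i ∈ s, u i →
      ∃ w : ι → ℕ, (∀ i ∈ s, l i ≤ w i ∧ w i ≤ u i) ∧ ∑ i ∈ s, w i = N := by
  classical
  induction s using Finset.induction_on with
  | empty => intro N h1 h2; exact ⟨l, by simp, by simp at *; omega⟩
  | insert a s ha ih =>
    intro N h1 h2
    rw [Finset.sum_insert ha] at h1 h2
    have hs : ∀ i ∈ s, l i ≤ u i := fun i hi => hlu i (Finset.mem_insert_of_mem hi)
    have hle := Finset.sum_le_sum hs
    have ha' := hlu a (Finset.mem_insert_self _ _)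
    obtain ⟨x, hx1, hx2, hx3, hx4⟩ : ∃ x, l a ≤ x ∧ x ≤ u a ∧ ∑ i ∈ s, l i ≤ N - x ∧
        N - x ≤ ∑ i ∈ s, u i ∧ x ≤ N := by
      refine ⟨max (l a) (N - ∑ i ∈ s, u i), ?_⟩
      omega
    obtain ⟨w, hw1, hw2⟩ := ih hs (N - x) hx3 hx4.1
    refine ⟨fun i => if i = a then x else w i, ?_, ?_⟩
    · intro i hi
      by_cases h : i = a
      · subst h; simp [hx1, hx2]
      · simp only [h, if_false]
        exact hw1 i ((Finset.mem_insert.1 hi).resolve_left h)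
    · rw [Finset.sum_insert ha]
      have : ∑ i ∈ s, (if i = a then x else w i) = ∑ i ∈ s, w i := by
        apply Finset.sum_congr rfl
        intro i hi
        rw [if_neg]
        rintro rfl
        exact ha hi
      rw [this, hw2]
      simp
      omega

theorem coboundary {V : Type*} [Fintype V] [DecidableEq V] (σ : Equiv.Perm V) (o : V → ZMod 4)
    [∀ x, DecidablePred (σ.SameCycle x)]
    (h : ∀ x, ∑ v ∈ Finset.univ.filter (fun v => σ.SameCycle x v), o v = 0) :
    ∃ r : V → ZMod 4, ∀ v, r (σ v) = r v + o v := by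
  let rep : V → V := fun v => Quotient.out (Quotient.mk (Equiv.Perm.SameCycle.setoid σ) v)
  have hrep : ∀ v, σ.SameCycle (rep v) v := fun v =>
    Quotient.exact (Quotient.out_eq (Quotient.mk (Equiv.Perm.SameCycle.setoid σ) v))
  have hrepσ : ∀ v, rep (σ v) = rep v := by
    intro v
    simp only [rep]
    congr 1
    exact Quotient.sound ((Equiv.Perm.sameCycle_apply_left).2 (Equiv.Perm.SameCycle.refl _ _))
  choose k hk using fun v => (hrep v).exists_nat_pow_eq
  let F : V → ℕ → ZMod 4 := fun x j => ∑ i ∈ Finset.range j, o ((σ ^ i) x)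
  -- well-definedness
  have hper : ∀ x i j, (σ ^ i) x = (σ ^ j) x → F x i = F x j := by
    intro x
    set s : Finset V := Finset.univ.filter (fun v => σ.SameCycle x v) with hs
    have hcyc : σ.IsCycleOn (s : Set V) := by
      refine ⟨?_, ?_⟩
      · refine ⟨?_, σ.injective.injOn, ?_⟩
        · intro v hv
          simp only [hs, Finset.coe_filter, Finset.mem_univ, true_and, Set.mem_ofPred_eq] at hv ⊢
          exact (Equiv.Perm.sameCycle_apply_right).2 hv
        · intro v hv
          simp only [hs, Finset.coe_filter, Finset.mem_univ, true_and, Set.mem_ofPred_eq] at hv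
          refine ⟨σ.symm v, ?_, by simp⟩
          simp only [hs, Finset.coe_filter, Finset.mem_univ, true_and, Set.mem_ofPred_eq]
          exact (Equiv.Perm.sameCycle_symm_apply_right).2 hv
      · intro v hv w hw
        simp only [hs, Finset.coe_filter, Finset.mem_univ, true_and, Set.mem_ofPred_eq] at hv hw
        exact hv.symm.trans hw
    have hx : x ∈ s := by simp [hs, Equiv.Perm.SameCycle.refl]
    have hpow := fun i j => hcyc.pow_apply_eq_pow_apply hx (m := i) (n := j)
    have hsum : F x s.card = 0 := by
      rw [← h x]
      simp only [F]
      refine Finset.sum_bij (fun i _ => (σ ^ i) x) ?_ ?_ ?_ ?_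
      · intro i _
        simp [Equiv.Perm.SameCycle.refl]
      · intro i hi j hj hij
        rw [hpow] at hij
        exact Nat.ModEq.eq_of_lt_of_lt hij (Finset.mem_range.1 hi) (Finset.mem_range.1 hj)
      · intro v hv
        obtain ⟨n, hn, e⟩ := hcyc.exists_pow_eq hx hv
        exact ⟨n, Finset.mem_range.2 hn, e⟩
      · intros; rfl
    have hadd : ∀ i, F x (i + s.card) = F x i := by
      intro i
      induction i with
      | zero => simp only [zero_add, hsum]; simp [F]
      | succ i ih =>
        have e : i + 1 + s.card = (i + s.card) + 1 := by ring
        rw [e]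
        simp only [F, Finset.sum_range_succ] at ih ⊢
        rw [ih]
        congr 2
        rw [hpow]
        simp [Nat.ModEq]
    have hmul : ∀ q i, F x (i + s.card * q) = F x i := by
      intro q
      induction q with
      | zero => simp
      | succ q ih => intro i; rw [Nat.mul_succ, ← add_assoc, hadd, ih]
    intro i j hij
    rw [hpow] at hij
    have e1 := hmul (i / s.card) (i % s.card)
    have e2 := hmul (j / s.card) (j % s.card)
    rw [Nat.mod_add_div] at e1 e2
    rw [e1, e2, hij]
  refine ⟨fun v => F (rep v) (k v), fun v => ?_⟩
  have h1 : (σ ^ (k (σ v))) (rep v) = (σ ^ (k v + 1)) (rep v) := by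
    have := hk (σ v)
    rw [hrepσ] at this
    rw [this, pow_succ', Equiv.Perm.mul_apply, hk]
  simp only [hrepσ]
  rw [hper _ _ _ h1]
  simp only [F, Finset.sum_range_succ, hk]


theorem even_of_involution {V : Type*} [DecidableEq V] (m : V → V) (hmm : ∀ v, m (m v) = v)
    (hne : ∀ v, m v ≠ v) (S : Finset V) (hS : ∀ v ∈ S, m v ∈ S) : Even S.card := by
  have : ∑ v ∈ S, (1 : ZMod 2) = 0 :=
    Finset.sum_involution (fun v _ => m v) (fun _ _ => by decide) (fun v _ _ => hne v)
      (fun v hv => hS v hv) (fun v _ => hmm v)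
  simp only [Finset.sum_const, nsmul_eq_mul, mul_one] at this
  exact (ZMod.natCast_eq_zero_iff_even).1 this

theorem agency_of_factor {V : Type*} [Fintype V] [DecidableEq V] (G : SimpleGraph V)
    (hG : G.Connected) (σ : Equiv.Perm V) (m : V → V)
    (hσ : ∀ v, G.Adj v (σ v)) (hσ2 : ∀ v, σ (σ v) ≠ v) (hσ3 : ∀ v, σ (σ (σ v)) ≠ v)
    (hm : ∀ v, G.Adj v (m v))
    (hmm : ∀ v, m (m v) = v) (hmσ : ∀ v, m v ≠ σ v)
    (hnb : ∀ a b, G.Adj a b → b = σ a ∨ a = σ b ∨ b = m a) :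
    ∃ a : Fin (Fintype.card V / 2) → ℕ → V,
      FeasibleAgency G (Fintype.card V / 2) (2 * Fintype.card V) a := by
  classical
  haveI := hG.nonempty
  obtain ⟨S, τ, ⟨hS, hτ, hsame, hcard, hr⟩, htrans⟩ := tree_exists G hG σ m hmm hnb
  let Q := Quotient (Equiv.Perm.SameCycle.setoid σ)
  letI : Fintype Q := Fintype.ofFinite _
  let cl : V → Q := fun v => Quotient.mk _ v
  have hcl : ∀ x y, cl x = cl y ↔ σ.SameCycle x y := fun x y => Quotient.eq
  have hclσ : ∀ x, cl (σ x) = cl x := fun x => by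
    rw [hcl, Equiv.Perm.sameCycle_apply_left]
  let A : Q → Finset V := fun q => Finset.univ.filter (fun v => cl v = q ∧ v ∉ S)
  let B : Q → Finset V := fun q => Finset.univ.filter (fun v => cl v = q ∧ v ∈ S)
  have hAB : ∀ q, 4 ≤ (A q).card + (B q).card := by
    intro q
    obtain ⟨v, rfl⟩ : ∃ v, cl v = q := Quotient.exists_rep q
    have hu : A (cl v) ∪ B (cl v) = Finset.univ.filter (fun w => cl w = cl v) := by
      ext w
      simp only [A, B, Finset.mem_union, Finset.mem_filter, Finset.mem_univ, true_and]
      tauto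
    have h4 : ({v, σ v, σ (σ v), σ (σ (σ v))} : Finset V) ⊆
        Finset.univ.filter (fun w => cl w = cl v) := by
      intro w hw
      simp only [Finset.mem_insert, Finset.mem_singleton] at hw
      simp only [Finset.mem_filter, Finset.mem_univ, true_and]
      rcases hw with rfl | rfl | rfl | rfl <;> simp [hclσ]
    have hc : ({v, σ v, σ (σ v), σ (σ (σ v))} : Finset V).card = 4 := by
      have h1 : ∀ v, v ≠ σ v := fun v => (hσ v).ne
      have h2 : ∀ v, v ≠ σ (σ v) := fun v => (hσ2 v).symm
      have h3 := (hσ3 v).symm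
      rw [Finset.card_insert_of_notMem, Finset.card_insert_of_notMem,
        Finset.card_insert_of_notMem, Finset.card_singleton]
      · simp [h1 v]
      · simp [h1 v, h2 v]
      · simp [h1 v, h2 v, h3]
    have := Finset.card_le_card h4
    rw [hc, ← hu] at this
    exact this.trans (Finset.card_union_le _ _)
  have hsumB : ∑ q, (B q).card = S.card := by
    rw [Finset.card_eq_sum_card_fiberwise (f := cl) (t := Finset.univ) (fun _ _ => Finset.mem_univ _)]
    refine Finset.sum_congr rfl fun q _ => ?_
    congr 1
    ext v
    simp only [B, Finset.mem_filter, Finset.mem_univ, true_and]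
    tauto
  set Fr : Finset V := Finset.univ.filter (· ∉ S) with hFr
  have hsumA : ∑ q, (A q).card = Fr.card := by
    rw [Finset.card_eq_sum_card_fiberwise (f := cl) (t := Finset.univ) (fun _ _ => Finset.mem_univ _)]
    refine Finset.sum_congr rfl fun q _ => ?_
    congr 1
    ext v
    simp only [A, hFr, Finset.mem_filter, Finset.mem_univ, true_and]
    tauto
  have hFS : Fr.card + S.card = Fintype.card V := by
    have := Finset.card_filter_add_card_filter_not (s := (Finset.univ : Finset V)) (· ∉ S)
    simp only [not_not, Finset.filter_univ_mem, Finset.card_univ] at this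
    exact this
  have hmne : ∀ v, m v ≠ v := fun v => (hm v).ne'
  have hmS : ∀ v, m v ∈ S ↔ v ∈ S := fun v => ⟨fun h => by simpa [hmm] using hS _ h, hS v⟩
  have hFeven : Even Fr.card := even_of_involution m hmm hmne Fr (by
    intro v hv
    simpa [hFr, hmS] using hv)
  have hcτ : 1 ≤ numCyc τ := by
    unfold numCyc
    haveI : Nonempty (Quotient (Equiv.Perm.SameCycle.setoid τ)) :=
      ⟨Quotient.mk _ (Classical.arbitrary V)⟩
    exact Nat.card_pos
  have hcQ : numCyc σ = (Finset.univ : Finset Q).card := by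
    unfold numCyc
    rw [Nat.card_eq_fintype_card, Finset.card_univ]
  -- the lower bound
  have hlow : ∑ q, ((A q).card + 3) / 4 ≤ Fr.card / 2 := by
    by_cases hd : ∀ q, 1 ≤ (B q).card
    · have h1 : ∀ q, 2 * (((A q).card + 3) / 4) + 2 ≤ (A q).card + (B q).card := by
        intro q
        have := hAB q
        have := hd q
        omega
      have h2 := Finset.sum_le_sum (fun q (_ : q ∈ Finset.univ) => h1 q)
      rw [Finset.sum_add_distrib, Finset.sum_add_distrib, hsumA, hsumB, ← Finset.mul_sum] at h2
      simp only [Finset.sum_const, smul_eq_mul] at h2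
      rw [hcQ] at hcard
      omega
    · push Not at hd
      obtain ⟨q, hq⟩ := hd
      have hB0 : B q = ∅ := Finset.card_eq_zero.1 (by omega)
      have hnS : ∀ v, cl v = q → v ∉ S := by
        intro v hv hvS
        have : v ∈ B q := by simp [B, hv, hvS]
        simp [hB0] at this
      obtain ⟨v, hv⟩ : ∃ v, cl v = q := Quotient.exists_rep q
      have hallq : ∀ w, cl w = q := by
        intro w
        obtain ⟨k, rfl⟩ := (htrans v w).exists_nat_pow_eq
        induction k with
        | zero => simpa using hv
        | succ k ih =>
          rw [pow_succ', Equiv.Perm.mul_apply, hτ, if_neg (hnS _ ih), hclσ, ih]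
      have huniv : ∀ q', q' = q := by
        intro q'
        obtain ⟨w, rfl⟩ : ∃ w, cl w = q' := Quotient.exists_rep q'
        exact hallq w
      have huu : (Finset.univ : Finset Q) = {q} := by
        ext q'; simp [huniv q']
      rw [huu, Finset.sum_singleton] at hsumA ⊢
      have := hAB q
      obtain ⟨x, hx⟩ := hFeven
      omega
  obtain ⟨w, hw1, hw2⟩ := sum_between (Finset.univ : Finset Q) (fun q => ((A q).card + 3) / 4)
    (fun q => (A q).card) (fun q _ => by omega) (Fr.card / 2) hlow (by rw [hsumA]; omega)
  have hoq : ∀ q, ∃ o : V → ℕ, (∀ v ∈ A q, 1 ≤ o v ∧ o v ≤ 4) ∧ ∑ v ∈ A q, o v = 4 * w q := by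
    intro q
    have := hw1 q (Finset.mem_univ _)
    exact sum_between (A q) (fun _ => 1) (fun _ => 4) (fun _ _ => by omega) (4 * w q)
      (by simp; omega) (by simp; omega)
  choose oq hoq1 hoq2 using hoq
  let o : V → ℕ := fun v => if v ∈ S then 4 else oq (cl v) v
  have hAo : ∀ q, ∀ v ∈ A q, o v = oq q v := by
    intro q v hv
    simp only [A, Finset.mem_filter, Finset.mem_univ, true_and] at hv
    simp [o, hv.1, hv.2]
  have hoS : ∀ v ∈ S, o v = 4 := fun v hv => by simp [o, hv]
  have ho : ∀ v, 1 ≤ o v ∧ o v ≤ 4 := by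
    intro v
    by_cases hv : v ∈ S
    · simp [hoS v hv]
    · have : v ∈ A (cl v) := by simp [A, hv]
      rw [hAo _ v this]
      exact hoq1 _ v this
  have hosum : ∑ v ∈ Fr, o v = 2 * Fr.card := by
    have h1 : ∑ v ∈ Fr, o v = ∑ q, ∑ v ∈ A q, o v := by
      rw [← Finset.sum_fiberwise_of_maps_to (g := cl) (t := Finset.univ)
        (fun _ _ => Finset.mem_univ _)]
      refine Finset.sum_congr rfl fun q _ => ?_
      refine Finset.sum_congr ?_ fun _ _ => rfl
      ext v
      simp only [A, hFr, Finset.mem_filter, Finset.mem_univ, true_and]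
      tauto
    rw [h1, Finset.sum_congr rfl (fun q _ => (Finset.sum_congr rfl (hAo q)).trans (hoq2 q)),
      ← Finset.mul_sum, hw2]
    obtain ⟨x, hx⟩ := hFeven
    omega
  obtain ⟨r0, hr0⟩ := coboundary σ (fun v => (o v : ZMod 4)) (by
    intro x
    have h44 : (4 : ZMod 4) = 0 := rfl
    have h1 : Finset.univ.filter (fun v => σ.SameCycle x v) = A (cl x) ∪ B (cl x) := by
      ext v
      simp only [A, B, Finset.mem_union, Finset.mem_filter, Finset.mem_univ, true_and, ← hcl,
        eq_comm (a := cl x)]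
      tauto
    rw [h1, Finset.sum_union]
    · rw [← Nat.cast_sum, Finset.sum_congr rfl (hAo _), hoq2]
      have : ∑ v ∈ B (cl x), (o v : ZMod 4) = 0 := by
        apply Finset.sum_eq_zero
        intro v hv
        simp only [B, Finset.mem_filter, Finset.mem_univ, true_and] at hv
        simp [hoS v hv.2, h44]
      rw [this]
      push_cast
      simp [h44]
    · rw [Finset.disjoint_left]
      intro v h1 h2
      simp only [A, B, Finset.mem_filter, Finset.mem_univ, true_and] at h1 h2
      exact h1.2 h2.2)
  obtain ⟨r, hr1, hr2⟩ := hr r0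
  refine final_walk G σ τ m S o r hσ hσ2 hm hmm hmσ hS (fun v => (ho v).1) (fun v => (ho v).2) hoS
    ?_ hr2 hτ htrans ?_
  · intro v
    have := hr1 v
    rw [hr0] at this
    linear_combination this
  · rw [hosum]; omega


/-- A 2-regular relation can be consistently oriented. -/
theorem orient_two_factor {V : Type*} [Finite V] (C : V → V → Prop)
    (hsymm : ∀ v w, C v w → C w v) (hirr : ∀ v, ¬ C v v)
    (oth : V → V → V) (ho1 : ∀ v w, C v w → C v (oth v w)) (ho2 : ∀ v w, C v w → oth v w ≠ w)
    (ho3 : ∀ v w u, C v w → C v u → u = w ∨ u = oth v w) (hex : ∀ v, ∃ w, C v w) :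
    ∃ σ : Equiv.Perm V, (∀ v, C v (σ v)) ∧ (∀ v, σ (σ v) ≠ v) ∧
      ∀ v w, C v w → w = σ v ∨ v = σ w := by
  classical
  have hoo : ∀ v w, C v w → oth v (oth v w) = w := by
    intro v w h
    rcases ho3 v (oth v w) w (ho1 v w h) h with h1 | h1
    · exact absurd h1.symm (ho2 v w h)
    · exact h1.symm
  let D := {p : V × V // C p.1 p.2}
  let ι : D → D := fun d => ⟨(d.1.2, d.1.1), hsymm _ _ d.2⟩
  let ν : Equiv.Perm D :=
    { toFun := fun d => ⟨(d.1.2, oth d.1.2 d.1.1), ho1 _ _ (hsymm _ _ d.2)⟩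
      invFun := fun d => ⟨(oth d.1.1 d.1.2, d.1.1), hsymm _ _ (ho1 _ _ d.2)⟩
      left_inv := by
        rintro ⟨⟨v, w⟩, h⟩
        apply Subtype.ext
        simp [hoo w v (hsymm _ _ h)]
      right_inv := by
        rintro ⟨⟨v, w⟩, h⟩
        apply Subtype.ext
        simp [hoo v w h] }
  have hιι : ∀ d, ι (ι d) = d := fun d => rfl
  have hιne : ∀ d, ι d ≠ d := by
    rintro ⟨⟨v, w⟩, h⟩ he
    have : w = v := congrArg (fun d : D => d.1.1) he
    subst this
    exact hirr _ h
  have hνne : ∀ d, ν d ≠ ι d := by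
    rintro ⟨⟨v, w⟩, h⟩ he
    have : oth w v = v := congrArg (fun d : D => d.1.2) he
    exact ho2 w v (hsymm _ _ h) this
  have hνι : ∀ d, ν (ι (ν d)) = ι d := by
    rintro ⟨⟨v, w⟩, h⟩
    apply Subtype.ext
    simp [ν, ι, hoo w v (hsymm _ _ h)]
  have hpow : ∀ (k : ℕ) d, (ν ^ k) (ι ((ν ^ k) d)) = ι d := by
    intro k
    induction k with
    | zero => intro d; rfl
    | succ k ih =>
      intro d
      rw [pow_succ, Equiv.Perm.mul_apply, Equiv.Perm.mul_apply]
      have h1 : (ν ^ k) (ν d) = ν ((ν ^ k) d) := by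
        rw [← Equiv.Perm.mul_apply, ← Equiv.Perm.mul_apply, ← pow_succ, ← pow_succ']
      rw [h1, hνι, ih]
  have hsameι : ∀ d d', ν.SameCycle d d' → ν.SameCycle (ι d) (ι d') := by
    intro d d' h
    obtain ⟨k, rfl⟩ := h.exists_nat_pow_eq
    exact Equiv.Perm.SameCycle.symm ⟨k, by rw [zpow_natCast, hpow]⟩
  have hnot : ∀ d, ¬ ν.SameCycle d (ι d) := by
    intro d h
    obtain ⟨k, hk⟩ := h.exists_nat_pow_eq
    obtain ⟨j, rfl | rfl⟩ := Nat.even_or_odd' k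
    · have h1 := hpow j d
      rw [← hk, two_mul, pow_add, Equiv.Perm.mul_apply] at h1
      exact hιne _ ((ν ^ j).injective h1)
    · have h1 := hpow j d
      rw [← hk, two_mul, pow_add, pow_add, pow_one, Equiv.Perm.mul_apply, Equiv.Perm.mul_apply] at h1
      have h2 := (ν ^ j).injective h1
      have h3 : (ν ^ j) (ν d) = ν ((ν ^ j) d) := by
        rw [← Equiv.Perm.mul_apply, ← Equiv.Perm.mul_apply, ← pow_succ, ← pow_succ']
      rw [h3] at h2
      exact hνne _ h2.symm
  obtain ⟨f, hf⟩ := exists_injective_nat (Quotient (Equiv.Perm.SameCycle.setoid ν))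
  let e : D → ℕ := fun d => f (Quotient.mk _ d)
  have he : ∀ d d', e d = e d' ↔ ν.SameCycle d d' := fun d d' =>
    ⟨fun h => Quotient.exact (hf h), fun h => congrArg f (Quotient.sound h)⟩
  let P : V → V → Prop := fun v w => ∃ h : C v w, e ⟨(v, w), h⟩ < e (ι ⟨(v, w), h⟩)
  have hPC : ∀ v w, P v w → C v w := fun v w h => h.1
  have hPs : ∀ v w, C v w → (P w v ↔ ¬ P v w) := by
    intro v w h
    have h1 : e ⟨(v, w), h⟩ ≠ e (ι ⟨(v, w), h⟩) := fun h' => hnot _ ((he _ _).1 h')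
    constructor
    · rintro ⟨h2, h3⟩ ⟨h4, h5⟩
      have h6 : e ⟨(w, v), h2⟩ < e ⟨(v, w), h⟩ := h3
      have h7 : e ⟨(v, w), h⟩ < e ⟨(w, v), h2⟩ := h5
      omega
    · intro h2
      refine ⟨hsymm _ _ h, ?_⟩
      by_contra h3
      apply h2
      refine ⟨h, ?_⟩
      have h4 : ¬ (e (ι ⟨(v, w), h⟩) < e ⟨(v, w), h⟩) := h3
      omega
  have hPν : ∀ v w, C v w → (P w (oth w v) ↔ P v w) := by
    intro v w h
    have hs : ν.SameCycle ⟨(v, w), h⟩ (ν ⟨(v, w), h⟩) :=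
      (Equiv.Perm.sameCycle_apply_right).2 (Equiv.Perm.SameCycle.refl _ _)
    have h1 := (he _ _).2 hs
    have h2 := (he _ _).2 (hsameι _ _ hs)
    have h3 : C w (oth w v) := ho1 _ _ (hsymm _ _ h)
    have h4 : ν ⟨(v, w), h⟩ = ⟨(w, oth w v), h3⟩ := rfl
    rw [h4] at h1 h2
    constructor
    · rintro ⟨h5, h6⟩
      exact ⟨h, by rw [h1, h2]; exact h6⟩
    · rintro ⟨h5, h6⟩
      exact ⟨h3, by rw [← h1, ← h2]; exact h6⟩
  have hPoth : ∀ v w, C v w → (P v (oth v w) ↔ ¬ P v w) := by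
    intro v w h
    rw [hPν w v (hsymm _ _ h), hPs v w h]
  have hPex : ∀ v, ∃ w, P v w := by
    intro v
    obtain ⟨w, hw⟩ := hex v
    by_cases h : P v w
    · exact ⟨w, h⟩
    · exact ⟨oth v w, (hPoth v w hw).2 h⟩
  choose s hs using hPex
  have huniq : ∀ v w, P v w → w = s v := by
    intro v w h
    rcases ho3 v (s v) w (hPC _ _ (hs v)) (hPC _ _ h) with h1 | h1
    · exact h1
    · rw [h1] at h
      exact absurd (hs v) ((hPoth v (s v) (hPC _ _ (hs v))).1 h)
  have hinj : Function.Injective s := by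
    intro v v' h
    have h1 := hs v
    have h2 := hs v'
    rw [← h] at h2
    have c1 := hsymm _ _ (hPC _ _ h1)
    have c2 := hsymm _ _ (hPC _ _ h2)
    rcases ho3 _ _ _ c1 c2 with h3 | h3
    · exact h3.symm
    · exfalso
      have h4 := (hPs _ _ (hPC _ _ h1)).not.2 (not_not.2 h1)
      have h5 := (hPs _ _ (hPC _ _ h2)).not.2 (not_not.2 h2)
      rw [h3] at h5
      exact h5 ((hPoth _ _ c1).2 h4)
  refine ⟨Equiv.ofBijective s (Finite.injective_iff_bijective.1 hinj), fun v => hPC _ _ (hs v),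
    ?_, ?_⟩
  · intro v hv
    have h1 : P (s v) v := by
      have := hs (s v)
      have e1 : s (s v) = v := hv
      rwa [e1] at this
    exact ((hPs _ _ (hPC _ _ (hs v))).1 h1) (hs v)
  · intro v w h
    by_cases hp : P v w
    · exact Or.inl (huniq _ _ hp)
    · exact Or.inr (huniq _ _ ((hPs v w h).2 hp))

/-- The agency exists once there is a perfect matching meeting every triangle. -/
theorem agency_of_matching {V : Type*} [Fintype V] [DecidableEq V] (G : SimpleGraph V)
    [DecidableRel G.Adj]
    (hG : G.Connected) (hreg : ∀ v : V, G.degree v = 3) (m : V → V)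
    (hm : ∀ v, G.Adj v (m v)) (hmm : ∀ v, m (m v) = v)
    (htri : ∀ x y z, G.Adj x y → G.Adj y z → G.Adj z x → m x = y ∨ m y = z ∨ m z = x) :
    ∃ a : Fin (Fintype.card V / 2) → ℕ → V,
      FeasibleAgency G (Fintype.card V / 2) (2 * Fintype.card V) a := by
  have h2 : ∀ v, ∃ a b, a ≠ b ∧ ∀ w, (G.Adj v w ∧ w ≠ m v) ↔ (w = a ∨ w = b) := by
    intro v
    have hc : ((G.neighborFinset v).erase (m v)).card = 2 := by
      rw [Finset.card_erase_of_mem (by simpa using hm v), G.card_neighborFinset_eq_degree, hreg]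
    obtain ⟨a, b, hab, h⟩ := Finset.card_eq_two.1 hc
    refine ⟨a, b, hab, fun w => ?_⟩
    have : w ∈ (G.neighborFinset v).erase (m v) ↔ w ∈ ({a, b} : Finset V) := by rw [h]
    simp only [Finset.mem_erase, SimpleGraph.mem_neighborFinset, Finset.mem_insert,
      Finset.mem_singleton] at this
    tauto
  choose a b hab hC using h2
  obtain ⟨σ, hs1, hs2, hs3⟩ := orient_two_factor (fun v w => G.Adj v w ∧ w ≠ m v)
    (by
      rintro v w ⟨h1, h2⟩
      refine ⟨h1.symm, ?_⟩
      rintro rfl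
      exact h2 (hmm _).symm)
    (fun v h => h.1.ne rfl) (fun v w => if w = a v then b v else a v)
    (by
      intro v w h
      rw [hC]
      split_ifs <;> simp)
    (by
      intro v w h
      rw [hC] at h
      split_ifs with h1
      · rw [h1]; exact (hab v).symm
      · exact fun h2 => h1 h2.symm)
    (by
      intro v w u h h'
      rw [hC] at h h'
      split_ifs with h1
      · subst h1; tauto
      · have : w = b v := by tauto
        subst this; tauto)
    (fun v => ⟨a v, (hC v _).2 (Or.inl rfl)⟩)
  refine agency_of_factor G hG σ m (fun v => (hs1 v).1) hs2 ?_ hm hmm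
    (fun v => (hs1 v).2.symm) ?_
  · intro v hv
    have h3 : G.Adj (σ (σ v)) v := by
      have := (hs1 (σ (σ v))).1
      rwa [hv] at this
    rcases htri v (σ v) (σ (σ v)) (hs1 _).1 (hs1 _).1 h3 with h | h | h
    · exact (hs1 v).2 h.symm
    · exact (hs1 (σ v)).2 h.symm
    · have := (hs1 (σ (σ v))).2
      rw [hv] at this
      exact this h.symm
  · intro x y h
    by_cases hy : y = m x
    · exact Or.inr (Or.inr hy)
    · rcases hs3 x y ⟨h, hy⟩ with h | h
      · exact Or.inl h
      · exact Or.inr (Or.inl h)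


theorem cut_three {V : Type*} [Fintype V] [DecidableEq V] (G : SimpleGraph V)
    [DecidableRel G.Adj]
    (h3ec : ∀ s : Finset (Sym2 V), s.card ≤ 2 → (G.deleteEdges ↑s).Connected)
    (S : Finset V) (hne : S.Nonempty) (hS : S ≠ Finset.univ) :
    3 ≤ ((Finset.univ : Finset (V × V)).filter
      (fun p => G.Adj p.1 p.2 ∧ p.1 ∉ S ∧ p.2 ∈ S)).card := by
  by_contra hlt
  set P := (Finset.univ : Finset (V × V)).filter
      (fun p => G.Adj p.1 p.2 ∧ p.1 ∉ S ∧ p.2 ∈ S) with hP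
  have hc := h3ec (P.image (fun p => s(p.1, p.2))) (Finset.card_image_le.trans (by omega))
  obtain ⟨u, hu⟩ := hne
  obtain ⟨v, hv⟩ : ∃ v, v ∉ S := by
    by_contra h
    push Not at h
    exact hS (Finset.eq_univ_iff_forall.2 h)
  obtain ⟨p⟩ := hc.preconnected u v
  obtain ⟨d, -, h1, h2⟩ := p.exists_boundary_dart (S : Set V) hu hv
  have had := d.adj
  rw [SimpleGraph.deleteEdges_adj] at had
  apply had.2
  simp only [Finset.coe_image, Set.mem_image, Finset.mem_coe]
  refine ⟨(d.snd, d.fst), ?_, Sym2.eq_swap⟩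
  simp only [hP, Finset.mem_filter, Finset.mem_univ, true_and]
  exact ⟨had.1.symm, h2, h1⟩

theorem quotient_matching {V Q : Type*} [Fintype V] [DecidableEq V] [Fintype Q] [DecidableEq Q]
    (G : SimpleGraph V) [DecidableRel G.Adj] (cl : V → Q) (hsurj : Function.Surjective cl)
    (heven : Even (Fintype.card V))
    (hodd : ∀ q, Odd ((Finset.univ : Finset V).filter (fun v => cl v = q)).card)
    (hout : ∀ q, ((Finset.univ : Finset (V × V)).filter
      (fun p => G.Adj p.1 p.2 ∧ cl p.1 = q ∧ cl p.2 ≠ q)).card ≤ 3)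
    (hcut : ∀ S : Finset V, S.Nonempty → S ≠ Finset.univ →
      3 ≤ ((Finset.univ : Finset (V × V)).filter
      (fun p => G.Adj p.1 p.2 ∧ p.1 ∉ S ∧ p.2 ∈ S)).card) :
    ∃ m : Q → Q, (∀ q, m (m q) = q) ∧ (∀ q, m q ≠ q) ∧
      ∀ q, ∃ a b, cl a = q ∧ cl b = m q ∧ G.Adj a b := by
  classical
  let G0 : SimpleGraph Q :=
    { Adj := fun A B => A ≠ B ∧ ∃ a b, cl a = A ∧ cl b = B ∧ G.Adj a b
      symm := ⟨fun A B h => ⟨h.1.symm, by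
        obtain ⟨_, a, b, h1, h2, h3⟩ := h
        exact ⟨b, a, h2, h1, h3.symm⟩⟩⟩
      loopless := ⟨fun A h => h.1 rfl⟩ }
  have hex : ∃ M : Subgraph G0, M.IsPerfectMatching := by
    rw [SimpleGraph.tutte]
    intro U hU
    unfold SimpleGraph.IsTutteViolator at hU
    set H := ((⊤ : G0.Subgraph).deleteVerts U).coe with hH
    have hverts : ∀ q, q ∈ ((⊤ : G0.Subgraph).deleteVerts U).verts ↔ q ∉ U := by
      intro q; simp
    let T : H.ConnectedComponent → Finset Q := fun c => Finset.univ.filter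
      (fun q => ∃ h : q ∈ ((⊤ : G0.Subgraph).deleteVerts U).verts,
        H.connectedComponentMk ⟨q, h⟩ = c)
    have hTcard : ∀ c, (T c).card = c.supp.ncard := by
      intro c
      rw [← Set.ncard_image_of_injective c.supp Subtype.val_injective, ← Set.ncard_coe_finset]
      congr 1
      ext q
      simp [T]
    have hTne : ∀ c, (T c).Nonempty := by
      intro c
      induction c using SimpleGraph.ConnectedComponent.ind with
      | _ v => exact ⟨v.1, by simp only [T, Finset.mem_filter, Finset.mem_univ, true_and]
                              exact ⟨v.2, trivial⟩⟩
    let S : H.ConnectedComponent → Finset V := fun c => Finset.univ.filter (fun v => cl v ∈ T c)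
    let P : H.ConnectedComponent → Finset (V × V) := fun c => Finset.univ.filter
      (fun p => G.Adj p.1 p.2 ∧ p.1 ∉ S c ∧ p.2 ∈ S c)
    have hS : ∀ c v, v ∈ S c ↔ cl v ∈ T c := by intro c v; simp [S]
    have hTmem : ∀ c q, q ∈ T c ↔ ∃ h : q ∈ ((⊤ : G0.Subgraph).deleteVerts U).verts,
        H.connectedComponentMk ⟨q, h⟩ = c := by intro c q; simp [T]
    have hP3 : ∀ c ∈ H.oddComponents, 3 ≤ (P c).card := by
      intro c hc
      apply hcut
      · obtain ⟨q, hq⟩ := hTne c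
        obtain ⟨v, rfl⟩ := hsurj q
        exact ⟨v, (hS c v).2 hq⟩
      · intro h
        have h1 : (S c).card = ∑ q ∈ T c, ((S c).filter (fun v => cl v = q)).card :=
          Finset.card_eq_sum_card_fiberwise (fun v hv => (hS c v).1 hv)
        have h2 : ∀ q ∈ T c, Odd ((S c).filter (fun v => cl v = q)).card := by
          intro q hq
          rw [h]; exact hodd q
        have h3 : Odd (S c).card := by
          rw [h1, Finset.odd_sum_iff_odd_card_odd, Finset.filter_true_of_mem h2, hTcard]
          exact hc
        rw [h, Finset.card_univ] at h3
        exact (Nat.not_even_iff_odd.2 h3) heven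
    have hPU : ∀ c, ∀ p ∈ P c, cl p.1 ∈ U ∧ cl p.2 ≠ cl p.1 := by
      intro c p hp
      simp only [P, Finset.mem_filter, Finset.mem_univ, true_and] at hp
      obtain ⟨hadj, h1, h2⟩ := hp
      rw [hS] at h1 h2
      have hne : cl p.2 ≠ cl p.1 := fun h => h1 (h ▸ h2)
      refine ⟨?_, hne⟩
      by_contra hU1
      apply h1
      rw [hTmem] at h2 ⊢
      obtain ⟨hv2, rfl⟩ := h2
      refine ⟨(hverts _).2 hU1, ?_⟩
      rw [SimpleGraph.ConnectedComponent.eq]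
      apply SimpleGraph.Adj.reachable
      rw [hH, Subgraph.coe_adj, Subgraph.deleteVerts_adj]
      refine ⟨by simp, hU1, by simp, (hverts _).1 hv2, ?_⟩
      rw [Subgraph.top_adj]
      exact ⟨hne.symm, p.1, p.2, rfl, rfl, hadj⟩
    let O : Finset H.ConnectedComponent := H.oddComponents.toFinset
    have hdisj : ∀ c ∈ O, ∀ d ∈ O, c ≠ d → Disjoint (P c) (P d) := by
      intro c _ d _ hcd
      rw [Finset.disjoint_left]
      intro p h1 h2
      simp only [P, Finset.mem_filter, Finset.mem_univ, true_and] at h1 h2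
      have e1 := (hTmem _ _).1 ((hS _ _).1 h1.2.2)
      have e2 := (hTmem _ _).1 ((hS _ _).1 h2.2.2)
      obtain ⟨_, e1⟩ := e1
      obtain ⟨_, e2⟩ := e2
      exact hcd (e1.symm.trans e2)
    have hlow : O.card * 3 ≤ (O.biUnion P).card := by
      rw [Finset.card_biUnion hdisj, ← smul_eq_mul]
      exact Finset.card_nsmul_le_sum _ _ _ (fun c hc => hP3 c (by simpa [O] using hc))
    have hup : (O.biUnion P).card ≤ U.toFinset.card * 3 := by
      have hsub : O.biUnion P ⊆ U.toFinset.biUnion (fun q => (Finset.univ : Finset (V × V)).filter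
          (fun p => G.Adj p.1 p.2 ∧ cl p.1 = q ∧ cl p.2 ≠ q)) := by
        intro p hp
        rw [Finset.mem_biUnion] at hp ⊢
        obtain ⟨c, _, hp⟩ := hp
        obtain ⟨h1, h2⟩ := hPU c p hp
        simp only [P, Finset.mem_filter, Finset.mem_univ, true_and] at hp
        exact ⟨cl p.1, by simpa using h1, by simpa using ⟨hp.1, h2⟩⟩
      refine (Finset.card_le_card hsub).trans ?_
      exact Finset.card_biUnion_le_card_mul _ _ _ (fun q _ => hout q)
    have e1 : U.ncard = U.toFinset.card := Set.ncard_eq_toFinset_card' U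
    have e2 : H.oddComponents.ncard = O.card := Set.ncard_eq_toFinset_card' _
    rw [e1] at hU
    have : U.toFinset.card < O.card := lt_of_lt_of_eq hU e2
    omega
  obtain ⟨M, hM1, hM2⟩ := hex
  choose m hm hmu using fun q => hM1 (hM2 q)
  refine ⟨m, fun q => (hmu (m q) q (hm q).symm).symm, fun q h => ?_, fun q => ?_⟩
  · have := (hm q).adj_sub
    exact this.1 h.symm
  · obtain ⟨_, a, b, h1, h2, h3⟩ := (hm q).adj_sub
    exact ⟨a, b, h1, h2, h3⟩


theorem deg_three_not_four {V : Type*} [Fintype V] [DecidableEq V] (G : SimpleGraph V)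
    [DecidableRel G.Adj] (hreg : ∀ v : V, G.degree v = 3) {v a b c d : V}
    (ha : G.Adj v a) (hb : G.Adj v b) (hc : G.Adj v c) (hd : G.Adj v d)
    (hab : a ≠ b) (hac : a ≠ c) (hbc : b ≠ c) : d = a ∨ d = b ∨ d = c := by
  by_contra h
  push Not at h
  have hsub : ({d, a, b, c} : Finset V) ⊆ G.neighborFinset v := by
    intro w hw
    simp only [Finset.mem_insert, Finset.mem_singleton] at hw
    rw [SimpleGraph.mem_neighborFinset]
    rcases hw with rfl | rfl | rfl | rfl <;> assumption
  have h4 : ({d, a, b, c} : Finset V).card = 4 := by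
    rw [Finset.card_insert_of_notMem (by simp [h]),
      Finset.card_insert_of_notMem (by simp [hab, hac]),
      Finset.card_insert_of_notMem (by simp [hbc])]
    simp
  have := Finset.card_le_card hsub
  rw [SimpleGraph.card_neighborFinset_eq_degree, hreg] at this
  omega

theorem lift_matching {V Q : Type*} [Fintype V] [DecidableEq V] [Fintype Q] [DecidableEq Q]
    (G : SimpleGraph V) (cl : V → Q)
    (hcls : ∀ v, (∀ w, cl w = cl v → w = v) ∨ ∃ y z, G.Adj v y ∧ G.Adj v z ∧ G.Adj y z ∧
      ∀ w, cl w = cl v ↔ w = v ∨ w = y ∨ w = z)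
    (htricl : ∀ x y z, G.Adj x y → G.Adj y z → G.Adj z x → cl x = cl y)
    (m : Q → Q) (hmm : ∀ q, m (m q) = q) (hmne : ∀ q, m q ≠ q)
    (hm : ∀ q, ∃ a b, cl a = q ∧ cl b = m q ∧ G.Adj a b) :
    ∃ m : V → V, (∀ v, G.Adj v (m v)) ∧ (∀ v, m (m v) = v) ∧
      ∀ x y z, G.Adj x y → G.Adj y z → G.Adj z x → m x = y ∨ m y = z ∨ m z = x := by
  classical
  choose a b ha hb hab using hm
  let e := Fintype.equivFin Q
  obtain ⟨φ, hφ, hφa⟩ : ∃ φ : Q → V, (∀ q, cl (φ q) = q) ∧ ∀ q, G.Adj (φ q) (φ (m q)) := by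
    refine ⟨fun q => if e q < e (m q) then a q else b (m q), fun q => ?_, fun q => ?_⟩
    · dsimp only
      split_ifs
      · exact ha q
      · rw [hb, hmm]
    · dsimp only
      rw [hmm]
      have hne : e q ≠ e (m q) := fun h => hmne q (e.injective h).symm
      rcases lt_or_gt_of_ne hne with h | h
      · rw [if_pos h, if_neg (not_lt.2 h.le)]
        exact hab q
      · rw [if_neg (not_lt.2 h.le), if_pos h]
        exact (hab (m q)).symm
  let R : V → V → Prop := fun v w => G.Adj v w ∧
    ((v = φ (cl v) ∧ w = φ (cl w) ∧ cl w = m (cl v)) ∨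
      (cl v = cl w ∧ v ≠ φ (cl v) ∧ w ≠ φ (cl w)))
  have hRs : ∀ v w, R v w → R w v := by
    rintro v w ⟨h1, ⟨h2, h3, h4⟩ | ⟨h2, h3, h4⟩⟩
    · exact ⟨h1.symm, Or.inl ⟨h3, h2, by rw [h4, hmm]⟩⟩
    · exact ⟨h1.symm, Or.inr ⟨h2.symm, h4, h3⟩⟩
  have hRe : ∀ v, ∃ w, R v w := by
    intro v
    by_cases hv : v = φ (cl v)
    · refine ⟨φ (m (cl v)), ?_, Or.inl ⟨hv, by rw [hφ], hφ _⟩⟩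
      have := hφa (cl v)
      rwa [← hv] at this
    · rcases hcls v with h | ⟨y, z, h1, h2, h3, h4⟩
      · exact absurd (h _ (hφ _)).symm hv
      · have hy : cl y = cl v := (h4 y).2 (by simp)
        have hz : cl z = cl v := (h4 z).2 (by simp)
        rcases (h4 _).1 (hφ (cl v)) with h | h | h
        · exact absurd h.symm hv
        · refine ⟨z, h2, Or.inr ⟨hz.symm, hv, ?_⟩⟩
          rw [hz, h]; exact h3.ne'
        · refine ⟨y, h1, Or.inr ⟨hy.symm, hv, ?_⟩⟩
          rw [hy, h]; exact h3.ne
  have hRu : ∀ v w w', R v w → R v w' → w = w' := by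
    rintro v w w' ⟨h1, ⟨h2, h3, h4⟩ | ⟨h2, h3, h4⟩⟩ ⟨k1, ⟨k2, k3, k4⟩ | ⟨k2, k3, k4⟩⟩
    · rw [h3, k3, h4, k4]
    · exact absurd h2 k3
    · exact absurd k2 h3
    · rcases hcls v with h | ⟨y, z, l1, l2, l3, l4⟩
      · exact absurd (h w h2.symm).symm h1.ne
      · have e1 := (l4 w).1 h2.symm
        have e2 := (l4 w').1 k2.symm
        have e3 := (l4 _).1 (hφ (cl v))
        rw [← h2] at h4
        rw [← k2] at k4
        have := h1.ne
        have := k1.ne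
        grind
  choose f hf using hRe
  refine ⟨f, fun v => (hf v).1, fun v => hRu (f v) _ _ (hf _) (hRs _ _ (hf v)), ?_⟩
  intro x y z hxy hyz hzx
  have c1 := htricl x y z hxy hyz hzx
  have c2 := htricl y z x hyz hzx hxy
  have key : ∀ x y, G.Adj x y → cl x = cl y → x ≠ φ (cl x) → y ≠ φ (cl x) → f x = y :=
    fun x y h1 h2 h3 h4 => hRu x _ _ (hf x) ⟨h1, Or.inr ⟨h2, h3, h2 ▸ h4⟩⟩
  by_cases hx : x = φ (cl x)
  · refine Or.inr (Or.inl (key y z hyz c2 ?_ ?_))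
    · rw [← c1, ← hx]; exact hxy.ne'
    · rw [← c1, ← hx]; exact hzx.ne
  · by_cases hy : y = φ (cl x)
    · refine Or.inr (Or.inr (key z x hzx (c1.trans c2).symm ?_ ?_))
      · rw [← c2, ← c1, ← hy]; exact hyz.ne'
      · rw [← c2, ← c1]; exact hx
    · exact Or.inl (key x y hxy c1 hx hy)

theorem diamond_case {V : Type*} [Fintype V] [DecidableEq V] (G : SimpleGraph V)
    [DecidableRel G.Adj] (hreg : ∀ v : V, G.degree v = 3)
    (h3ec : ∀ s : Finset (Sym2 V), s.card ≤ 2 → (G.deleteEdges ↑s).Connected)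
    {x y z w : V} (hyz : G.Adj y z) (hxy : G.Adj x y) (hxz : G.Adj x z)
    (hwy : G.Adj w y) (hwz : G.Adj w z) (hxw : x ≠ w) :
    ∃ m : V → V, (∀ v, G.Adj v (m v)) ∧ (∀ v, m (m v) = v) ∧
      ∀ x y z, G.Adj x y → G.Adj y z → G.Adj z x → m x = y ∨ m y = z ∨ m z = x := by
  have huniv : ({x, y, z, w} : Finset V) = Finset.univ := by
    by_contra hne
    have h3 := cut_three G h3ec _ ⟨x, by simp⟩ hne
    have hle : ((Finset.univ : Finset (V × V)).filter
      (fun p => G.Adj p.1 p.2 ∧ p.1 ∉ ({x, y, z, w} : Finset V) ∧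
        p.2 ∈ ({x, y, z, w} : Finset V))).card ≤ ({x, w} : Finset V).card := by
      refine Finset.card_le_card_of_injOn Prod.snd ?_ ?_
      · rintro ⟨p, q⟩ hp
        simp only [Finset.coe_filter, Finset.mem_univ, true_and, Set.mem_ofPred_eq,
          Finset.mem_insert, Finset.mem_singleton, not_or] at hp
        obtain ⟨h1, ⟨n1, n2, n3, n4⟩, rfl | rfl | rfl | rfl⟩ := hp
        · simp
        · have := deg_three_not_four G hreg hxy.symm hyz hwy.symm h1.symm hxz.ne hxw hwz.ne'
          tauto
        · have := deg_three_not_four G hreg hxz.symm hyz.symm hwz.symm h1.symm hxy.ne hxw hwy.ne'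
          tauto
        · simp
      · rintro ⟨p, q⟩ hp ⟨p', q'⟩ hp' hq
        simp only [Finset.coe_filter, Finset.mem_univ, true_and, Set.mem_ofPred_eq,
          Finset.mem_insert, Finset.mem_singleton, not_or] at hp hp' hq
        subst hq
        obtain ⟨h1, ⟨n1, n2, n3, n4⟩, rfl | rfl | rfl | rfl⟩ := hp
        · have := deg_three_not_four G hreg hxy hxz h1.symm hp'.1.symm hyz.ne
            (Ne.symm n2) (Ne.symm n3)
          grind
        · have := deg_three_not_four G hreg hxy.symm hyz hwy.symm h1.symm hxz.ne hxw hwz.ne'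
          tauto
        · have := deg_three_not_four G hreg hxz.symm hyz.symm hwz.symm h1.symm hxy.ne hxw hwy.ne'
          tauto
        · have := deg_three_not_four G hreg hwy hwz h1.symm hp'.1.symm hyz.ne
            (Ne.symm n2) (Ne.symm n3)
          grind
    have : ({x, w} : Finset V).card ≤ 2 := Finset.card_le_two
    omega
  have hall : ∀ v, v = x ∨ v = y ∨ v = z ∨ v = w := by
    intro v
    have : v ∈ ({x, y, z, w} : Finset V) := by rw [huniv]; exact Finset.mem_univ _
    simpa using this
  have hxwadj : G.Adj x w := by
    by_contra hn
    have hsub : G.neighborFinset x ⊆ {y, z} := by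
      intro v hv
      rw [SimpleGraph.mem_neighborFinset] at hv
      rcases hall v with rfl | rfl | rfl | rfl
      · exact absurd rfl hv.ne
      · simp
      · simp
      · exact absurd hv hn
    have := Finset.card_le_card hsub
    rw [SimpleGraph.card_neighborFinset_eq_degree, hreg] at this
    have : ({y, z} : Finset V).card ≤ 2 := Finset.card_le_two
    omega
  have n1 := hxy.ne
  have n2 := hxz.ne
  have n3 := hyz.ne
  have n4 := hwy.ne
  have n5 := hwz.ne
  let m : V → V := fun v => if v = x then w else if v = w then x else if v = y then z else y
  have m1 : m x = w := by simp [m]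
  have m2 : m w = x := by simp [m, hxw.symm]
  have m3 : m y = z := by simp [m, n1.symm, n4.symm]
  have m4 : m z = y := by simp [m, n2.symm, n5.symm, n3.symm]
  refine ⟨m, ?_, ?_, ?_⟩
  · intro v
    rcases hall v with rfl | rfl | rfl | rfl
    · rwa [m1]
    · rwa [m3]
    · rw [m4]; exact hyz.symm
    · rw [m2]; exact hxwadj.symm
  · intro v
    rcases hall v with rfl | rfl | rfl | rfl
    · rw [m1, m2]
    · rw [m3, m4]
    · rw [m4, m3]
    · rw [m2, m1]
  · intro a b c hab hbc hca
    have k1 := hab.ne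
    have k2 := hbc.ne
    have k3 := hca.ne
    have ha := hall a
    have hb := hall b
    have hc := hall c
    clear_value m
    clear hall huniv
    grind

theorem diamond_free_case {V : Type*} [Fintype V] [DecidableEq V] (G : SimpleGraph V)
    [DecidableRel G.Adj] (hreg : ∀ v : V, G.degree v = 3)
    (h3ec : ∀ s : Finset (Sym2 V), s.card ≤ 2 → (G.deleteEdges ↑s).Connected)
    (hnd : ∀ x y z w, G.Adj y z → G.Adj x y → G.Adj x z → G.Adj w y → G.Adj w z → x = w) :
    ∃ m : V → V, (∀ v, G.Adj v (m v)) ∧ (∀ v, m (m v) = v) ∧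
      ∀ x y z, G.Adj x y → G.Adj y z → G.Adj z x → m x = y ∨ m y = z ∨ m z = x := by
  classical
  let r : V → V → Prop := fun x y => x = y ∨ (G.Adj x y ∧ ∃ z, G.Adj x z ∧ G.Adj y z)
  have hrt : ∀ x y w, r x y → r y w → r x w := by
    rintro x y w (rfl | ⟨h1, z, h2, h3⟩) (rfl | ⟨k1, u, k2, k3⟩)
    · exact Or.inl rfl
    · exact Or.inr ⟨k1, u, k2, k3⟩
    · exact Or.inr ⟨h1, z, h2, h3⟩
    · by_cases e1 : w = x
      · exact Or.inl e1.symm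
      by_cases e2 : w = z
      · subst e2
        exact Or.inr ⟨h2, y, h1, k1.symm⟩
      rcases deg_three_not_four G hreg h1.symm h3 k1 k2 h2.ne (Ne.symm e1) (Ne.symm e2)
        with rfl | rfl | rfl
      · exact absurd (hnd w y u z k2 k1.symm k3 h3.symm h2.symm) e2
      · exact absurd (hnd w y u x k2 k1.symm k3 h1 h2) e1
      · exact absurd rfl k3.ne
  let s : Setoid V := ⟨r, fun x => Or.inl rfl, by
    rintro x y (rfl | ⟨h1, z, h2, h3⟩)
    · exact Or.inl rfl
    · exact Or.inr ⟨h1.symm, z, h3, h2⟩, fun {x y z} => hrt x y z⟩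
  let Q := Quotient s
  letI : Fintype Q := Fintype.ofFinite _
  let cl : V → Q := fun v => Quotient.mk s v
  have hcl : ∀ x y, cl x = cl y ↔ r x y := fun x y => Quotient.eq
  have htricl : ∀ x y z, G.Adj x y → G.Adj y z → G.Adj z x → cl x = cl y :=
    fun x y z h1 h2 h3 => (hcl x y).2 (Or.inr ⟨h1, z, h3.symm, h2⟩)
  have hcls : ∀ v, (∀ w, cl w = cl v → w = v) ∨ ∃ y z, G.Adj v y ∧ G.Adj v z ∧ G.Adj y z ∧
      ∀ w, cl w = cl v ↔ w = v ∨ w = y ∨ w = z := by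
    intro v
    by_cases h : ∃ y z, G.Adj v y ∧ G.Adj v z ∧ G.Adj y z
    · right
      obtain ⟨y, z, h1, h2, h3⟩ := h
      refine ⟨y, z, h1, h2, h3, fun w => ⟨fun hw => ?_, ?_⟩⟩
      · rcases (hcl _ _).1 hw with hw | ⟨k1, u, k2, k3⟩
        · exact Or.inl hw
        · right
          by_contra hn
          push Not at hn
          rcases deg_three_not_four G hreg h1 h2 k1.symm k3 h3.ne (Ne.symm hn.1) (Ne.symm hn.2)
            with rfl | rfl | rfl
          · exact hn.2 (hnd w v u z h1 k1 k2 h2.symm h3.symm)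
          · exact hn.1 (hnd w v u y h2 k1 k2 h1.symm h3)
          · exact k2.ne rfl
      · rintro (rfl | rfl | rfl)
        · rfl
        · exact (htricl _ _ _ h1 h3 h2.symm).symm
        · exact (htricl _ _ _ h2 h3.symm h1.symm).symm
    · left
      intro w hw
      rcases (hcl _ _).1 hw with hw | ⟨k1, u, k2, k3⟩
      · exact hw
      · exact absurd ⟨w, u, k1.symm, k3, k2⟩ h
  have heven : Even (Fintype.card V) := by
    have h := G.sum_degrees_eq_twice_card_edges
    simp only [hreg, Finset.sum_const, Finset.card_univ, smul_eq_mul] at h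
    rw [Nat.even_iff]
    omega
  have hsurj : Function.Surjective cl := Quotient.mk_surjective
  have hodd : ∀ q, Odd ((Finset.univ : Finset V).filter (fun v => cl v = q)).card := by
    intro q
    obtain ⟨v, rfl⟩ := hsurj q
    rcases hcls v with h | ⟨y, z, h1, h2, h3, h4⟩
    · have : (Finset.univ : Finset V).filter (fun w => cl w = cl v) = {v} := by
        ext w
        simp only [Finset.mem_filter, Finset.mem_univ, true_and, Finset.mem_singleton]
        exact ⟨h w, fun h => h ▸ rfl⟩
      rw [this]; simp
    · have : (Finset.univ : Finset V).filter (fun w => cl w = cl v) = {v, y, z} := by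
        ext w
        simp only [Finset.mem_filter, Finset.mem_univ, true_and, Finset.mem_singleton,
          Finset.mem_insert]
        exact h4 w
      rw [this, Finset.card_insert_of_notMem (by simp [h1.ne, h2.ne]),
        Finset.card_insert_of_notMem (by simp [h3.ne])]
      simp only [Finset.card_singleton]
      decide
  have hout : ∀ q, ((Finset.univ : Finset (V × V)).filter
      (fun p => G.Adj p.1 p.2 ∧ cl p.1 = q ∧ cl p.2 ≠ q)).card ≤ 3 := by
    intro q
    obtain ⟨v, rfl⟩ := hsurj q
    rcases hcls v with h | ⟨y, z, h1, h2, h3, h4⟩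
    · rw [← hreg v, ← SimpleGraph.card_neighborFinset_eq_degree]
      refine Finset.card_le_card_of_injOn Prod.snd ?_ ?_
      · rintro ⟨a, b⟩ hp
        simp only [Finset.coe_filter, Finset.mem_univ, true_and, Set.mem_ofPred_eq] at hp
        have := h a hp.2.1
        subst this
        simpa using hp.1
      · rintro ⟨a, b⟩ hp ⟨a', b'⟩ hp' hq
        simp only [Finset.coe_filter, Finset.mem_univ, true_and, Set.mem_ofPred_eq] at hp hp' hq
        rw [hq, h a hp.2.1, h a' hp'.2.1]
    · refine le_trans (Finset.card_le_card_of_injOn (t := {v, y, z}) Prod.fst ?_ ?_)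
        Finset.card_le_three
      · rintro ⟨a, b⟩ hp
        simp only [Finset.coe_filter, Finset.mem_univ, true_and, Set.mem_ofPred_eq] at hp
        simpa using (h4 a).1 hp.2.1
      · rintro ⟨a, b⟩ hp ⟨a', b'⟩ hp' hq
        simp only [Finset.coe_filter, Finset.mem_univ, true_and, Set.mem_ofPred_eq] at hp hp' hq
        subst hq
        obtain ⟨p1, p2, p3⟩ := hp
        obtain ⟨q1, q2, q3⟩ := hp'
        have p3' : ¬ (b = v ∨ b = y ∨ b = z) := fun h => p3 ((h4 b).2 h)
        have q3' : ¬ (b' = v ∨ b' = y ∨ b' = z) := fun h => q3 ((h4 b').2 h)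
        push Not at p3' q3'
        have hbb : b' = b := by
          rcases (h4 a).1 p2 with rfl | rfl | rfl
          · have := deg_three_not_four G hreg h1 h2 p1 q1 h3.ne (Ne.symm p3'.2.1)
              (Ne.symm p3'.2.2)
            tauto
          · have := deg_three_not_four G hreg h1.symm h3 p1 q1 h2.ne (Ne.symm p3'.1)
              (Ne.symm p3'.2.2)
            tauto
          · have := deg_three_not_four G hreg h2.symm h3.symm p1 q1 h1.ne (Ne.symm p3'.1)
              (Ne.symm p3'.2.1)
            tauto
        rw [hbb]
  obtain ⟨m, h1, h2, h3⟩ := quotient_matching G cl hsurj heven hodd hout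
    (fun S h1 h2 => cut_three G h3ec S h1 h2)
  exact lift_matching G cl hcls htricl m h1 h2 h3


/-- a 3-regular 3-edge-connected graph on `n` vertices admits a
feasible agency with time horizon `T = 2n` and `k = n/2` agents. -/
theorem stmt9 {V : Type*} [Fintype V] (G : SimpleGraph V) [DecidableRel G.Adj]
    (hreg : ∀ v : V, G.degree v = 3)
    (h3ec : ∀ s : Finset (Sym2 V), s.card ≤ 2 → (G.deleteEdges ↑s).Connected) :
    ∃ a : Fin (Fintype.card V / 2) → ℕ → V,
      FeasibleAgency G (Fintype.card V / 2) (2 * Fintype.card V) a := by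
  classical
  have hG : G.Connected := by
    have := h3ec ∅ (by simp)
    simpa using this
  have hex : ∃ m : V → V, (∀ v, G.Adj v (m v)) ∧ (∀ v, m (m v) = v) ∧
      ∀ x y z, G.Adj x y → G.Adj y z → G.Adj z x → m x = y ∨ m y = z ∨ m z = x := by
    by_cases hnd : ∀ x y z w, G.Adj y z → G.Adj x y → G.Adj x z → G.Adj w y → G.Adj w z → x = w
    · exact diamond_free_case G hreg h3ec hnd
    · push Not at hnd
      obtain ⟨x, y, z, w, h1, h2, h3, h4, h5, h6⟩ := hnd
      exact diamond_case G hreg h3ec h1 h2 h3 h4 h5 h6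
  obtain ⟨m, hm, hmm, htri⟩ := hex
  exact agency_of_matching G hG hreg m hm hmm htri
end

section
/- Let G be a finite simple graph on n ≥ 2 vertices. There exists a feasible agency (with parking) in G with k = n agents and some time horizon T if and only if G is 2-edge-connected, i.e. G is connected and has no cut edge. -/
open SimpleGraph

/-- A permutation of the vertices realizing one crash-free time step. -/
def IsMovePerm {V : Type*} (G : SimpleGraph V) (s : Equiv.Perm V) : Prop :=
  (∀ x, x = s x ∨ G.Adj x (s x)) ∧ ∀ x, s (s x) = x → s x = x

theorem IsMovePerm.inv {V : Type*} {G : SimpleGraph V} {s : Equiv.Perm V}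
    (h : IsMovePerm G s) : IsMovePerm G s⁻¹ := by
  refine ⟨fun x => ?_, fun x hx => ?_⟩
  · have hself : s (s⁻¹ x) = x := by simp
    rcases h.1 (s⁻¹ x) with h1 | h1
    · left
      rw [hself] at h1
      exact h1.symm
    · right
      rw [hself] at h1
      exact h1.symm
  · have h2 : s (s x) = x := by
      conv_lhs => rw [← hx]
      simp
    have h3 := h.2 x h2
    rw [Equiv.Perm.inv_eq_iff_eq]
    exact h3.symm

theorem exists_move_of_adj {V : Type*} {G : SimpleGraph V} {u v : V} (huv : G.Adj u v)
    (hb : ¬ G.IsBridge s(v, u)) : ∃ s : Equiv.Perm V, IsMovePerm G s ∧ s u = v := by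
  classical
  rw [isBridge_iff, not_not] at hb
  obtain ⟨p, hp⟩ := hb.exists_isPath
  have hlen : 2 ≤ p.length := by
    by_contra hlt
    have h01 : p.length = 0 ∨ p.length = 1 := by omega
    rcases h01 with h0 | h1
    · exact huv.ne (Walk.eq_of_length_eq_zero h0).symm
    · have := Walk.adj_of_length_eq_one h1
      simp at this
  have hsl : p.support.length = p.length + 1 := p.length_support
  have hnd := hp.support_nodup
  have hlast : p.support.formPerm u = v := by
    have h := List.formPerm_apply_getElem p.support hnd p.length (by omega)
    simpa [hsl] using h
  have hform := List.formPerm_apply_getElem p.support hnd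
  refine ⟨p.support.formPerm, ⟨fun x => ?_, fun x hx => ?_⟩, hlast⟩
  · by_cases hxm : x ∈ p.support
    · right
      obtain ⟨i, hi, rfl⟩ := List.getElem_of_mem hxm
      by_cases hil : i = p.length
      · subst hil
        rw [p.support_getElem_length, hlast]
        exact huv
      · rw [List.formPerm_apply_lt_getElem _ hnd i (by omega), p.support_getElem_eq_getVert,
          p.support_getElem_eq_getVert]
        exact (deleteEdges_le _) (p.adj_getVert_succ (by omega))
    · left
      exact (List.formPerm_apply_of_notMem hxm).symm
  · by_cases hxm : x ∈ p.support
    · exfalso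
      obtain ⟨i, hi, rfl⟩ := List.getElem_of_mem hxm
      rw [hform, hform, hnd.getElem_inj_iff] at hx
      rw [hsl] at hx hi
      rcases Nat.lt_or_ge (i + 1) (p.length + 1) with h1 | h1
      · rw [Nat.mod_eq_of_lt h1] at hx
        rcases Nat.lt_or_ge (i + 1 + 1) (p.length + 1) with h2 | h2
        · rw [Nat.mod_eq_of_lt h2] at hx
          omega
        · have : i + 1 + 1 = p.length + 1 := by omega
          rw [this, Nat.mod_self] at hx
          omega
      · have : i + 1 = p.length + 1 := by omega
        rw [this, Nat.mod_self, Nat.mod_eq_of_lt (by omega)] at hx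
        omega
    · exact List.formPerm_apply_of_notMem hxm

theorem exists_moves_transitive {V : Type*} {G : SimpleGraph V} (hc : G.Connected)
    (hb : ∀ e : Sym2 V, ¬ G.IsBridge e) (u v : V) :
    ∃ l : List (Equiv.Perm V), (∀ s ∈ l, IsMovePerm G s) ∧ l.prod u = v := by
  obtain ⟨p⟩ := hc.preconnected v u
  induction p with
  | nil => exact ⟨[], by simp, by simp⟩
  | cons h p ih =>
    obtain ⟨l, hl, hlu⟩ := ih
    obtain ⟨s, hs, hsv⟩ := exists_move_of_adj h.symm (hb _)
    refine ⟨s :: l, ?_, ?_⟩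
    · intro s' hs'
      rcases List.mem_cons.1 hs' with rfl | h'
      · exact hs
      · exact hl _ h'
    · simp [hlu, hsv]

theorem exists_moves_visiting {V : Type*} {G : SimpleGraph V} (hc : G.Connected)
    (hb : ∀ e : Sym2 V, ¬ G.IsBridge e) (F : Finset (V × V)) :
    ∃ l : List (Equiv.Perm V), (∀ s ∈ l, IsMovePerm G s) ∧
      ∀ q ∈ F, ∃ t ≤ l.length, (l.take t).prod q.1 = q.2 := by
  classical
  induction F using Finset.induction_on with
  | empty => exact ⟨[], by simp, by simp⟩
  | insert q F hq ih =>
    obtain ⟨l, hl, hlF⟩ := ih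
    obtain ⟨l', hl', hlq⟩ := exists_moves_transitive hc hb q.1 (l.prod⁻¹ q.2)
    refine ⟨l ++ l', ?_, ?_⟩
    · intro s hs
      rcases List.mem_append.1 hs with h | h
      · exact hl _ h
      · exact hl' _ h
    · intro q' hq'
      rcases Finset.mem_insert.1 hq' with rfl | h
      · exact ⟨(l ++ l').length, le_rfl, by
          rw [List.take_length, List.prod_append, Equiv.Perm.mul_apply, hlq]; simp⟩
      · obtain ⟨t, ht, hqt⟩ := hlF _ h
        refine ⟨t, by simp; omega, ?_⟩
        rw [List.take_append_of_le_length ht]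
        exact hqt

theorem agency_of_bridgeless {V : Type*} [Fintype V] {G : SimpleGraph V} (hc : G.Connected)
    (hb : ∀ e : Sym2 V, ¬ G.IsBridge e) :
    ∃ T : ℕ, ∃ a : Fin (Fintype.card V) → ℕ → V, FeasibleAgency G (Fintype.card V) T a := by
  classical
  obtain ⟨l0, hl0, hv0⟩ := exists_moves_visiting hc hb Finset.univ
  obtain ⟨l, hl, hv, hprod⟩ : ∃ l : List (Equiv.Perm V), (∀ s ∈ l, IsMovePerm G s) ∧
      (∀ u v : V, ∃ t ≤ l.length, (l.take t).prod u = v) ∧ l.prod = 1 := by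
    refine ⟨l0 ++ (l0.map fun x => x⁻¹).reverse, ?_, ?_, ?_⟩
    · intro s hs
      rcases List.mem_append.1 hs with h | h
      · exact hl0 _ h
      · rw [List.mem_reverse, List.mem_map] at h
        obtain ⟨s', hs', rfl⟩ := h
        exact (hl0 _ hs').inv
    · intro u v
      obtain ⟨t, ht, hqt⟩ := hv0 (u, v) (Finset.mem_univ _)
      refine ⟨t, by simp; omega, ?_⟩
      rw [List.take_append_of_le_length ht]
      exact hqt
    · rw [List.prod_append, ← List.prod_inv_reverse, mul_inv_cancel]
  let e := (Fintype.equivFin V).symm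
  have step : ∀ t < l.length, ∃ s, IsMovePerm G s ∧
      ∀ x, (l.take (t + 1)).prod⁻¹ x = s ((l.take t).prod⁻¹ x) := by
    intro t ht
    refine ⟨(l[t])⁻¹, (hl _ (List.getElem_mem ht)).inv, fun x => ?_⟩
    rw [List.prod_take_succ _ _ ht, mul_inv_rev]
    rfl
  refine ⟨l.length, fun i t => (l.take t).prod⁻¹ (e i), fun i => ⟨?_, ?_, ?_⟩, ?_⟩
  · intro t ht
    obtain ⟨s, hs, hst⟩ := step t ht
    simp only [hst]
    exact hs.1 _
  · intro v
    obtain ⟨t, ht, h⟩ := hv v (e i)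
    refine ⟨t, ht, ?_⟩
    simp only [Equiv.Perm.inv_eq_iff_eq]
    exact h.symm
  · simp [hprod]
  · intro i j hij
    refine ⟨fun t _ h => hij ?_, fun t ht => ?_⟩
    · exact e.injective ((l.take t).prod⁻¹.injective h)
    · obtain ⟨s, hs, hst⟩ := step t ht
      simp only [hst]
      rintro ⟨h1, h2, h3⟩
      apply h3
      symm
      apply hs.2
      rw [h2]
      exact h1.symm

theorem exists_cross_back {V : Type*} [Finite V] (s : Equiv.Perm V) (A : Set V) {x : V}
    (hx : x ∈ A) (hsx : s x ∉ A) : ∃ y, y ∉ A ∧ s y ∈ A := by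
  by_contra! hcon
  have hsub : s ⁻¹' A ⊆ A := fun y hy => by
    by_contra hyA
    exact hcon y hyA hy
  have hcard : A.ncard ≤ (s ⁻¹' A).ncard := by
    have : s ⁻¹' A = s.symm '' A := by
      rw [Equiv.image_eq_preimage_symm]; rfl
    rw [this, Set.ncard_image_of_injective _ s.symm.injective]
  have heq := Set.eq_of_subset_of_ncard_le hsub hcard (Set.toFinite _)
  rw [← heq] at hx
  exact hsx hx

theorem bridgeless_of_agency {V : Type*} [Fintype V] {G : SimpleGraph V}
    (hn : 2 ≤ Fintype.card V) {T : ℕ} {a : Fin (Fintype.card V) → ℕ → V}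
    (h : FeasibleAgency G (Fintype.card V) T a) :
    G.Connected ∧ ∀ e : Sym2 V, ¬ G.IsBridge e := by
  classical
  obtain ⟨htour, hcrash⟩ := h
  let i0 : Fin (Fintype.card V) := ⟨0, by omega⟩
  constructor
  · have hreach : ∀ t ≤ T, G.Reachable (a i0 0) (a i0 t) := by
      intro t
      induction t with
      | zero => intro _; exact Reachable.refl _
      | succ t ih =>
        intro ht
        have h1 := ih (by omega)
        rcases (htour i0).1 t (by omega) with h2 | h2
        · rw [← h2]; exact h1
        · exact h1.trans h2.reachable
    rw [connected_iff_exists_forall_reachable]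
    refine ⟨a i0 0, fun v => ?_⟩
    obtain ⟨t, ht, rfl⟩ := (htour i0).2.1 v
    exact hreach t ht
  · intro e
    induction e with
    | h u v =>
    intro hb
    rw [isBridge_iff] at hb
    let A : Set V := {x | (G.deleteEdges {s(u, v)}).Reachable u x}
    have huA : u ∈ A := Reachable.refl _
    have hvA : v ∉ A := hb
    have hcross : ∀ x y, G.Adj x y → x ∈ A → y ∉ A → x = u ∧ y = v := by
      intro x y hxy hx hy
      by_contra hne
      apply hy
      refine Reachable.trans (v := x) hx (Adj.reachable ?_)
      rw [deleteEdges_adj]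
      refine ⟨hxy, fun hm => ?_⟩
      rw [Set.mem_singleton_iff, Sym2.eq_iff] at hm
      rcases hm with hm | ⟨rfl, rfl⟩
      · exact hne hm
      · exact hvA hx
    have hbij : ∀ t ≤ T, Function.Bijective (fun i => a i t) := by
      intro t ht
      rw [Fintype.bijective_iff_injective_and_card]
      refine ⟨fun i j hij => ?_, by simp⟩
      by_contra hne
      exact (hcrash i j hne).1 t ht hij
    have hno : ∀ t < T, ∀ i j, a i t ∈ A → a i (t + 1) ∉ A → a j t ∉ A →
        a j (t + 1) ∈ A → False := by
      intro t ht i j h1 h2 h3 h4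
      have hij : i ≠ j := by rintro rfl; exact h3 h1
      have e1 : G.Adj (a i t) (a i (t + 1)) := by
        rcases (htour i).1 t ht with h | h
        · rw [← h] at h2; exact absurd h1 h2
        · exact h
      have e2 : G.Adj (a j t) (a j (t + 1)) := by
        rcases (htour j).1 t ht with h | h
        · rw [← h] at h4; exact absurd h4 h3
        · exact h
      obtain ⟨p1, p2⟩ := hcross _ _ e1 h1 h2
      obtain ⟨p3, p4⟩ := hcross _ _ e2.symm h4 h3
      exact (hcrash i j hij).2 t ht ⟨p1.trans p3.symm, p2.trans p4.symm, e1.ne⟩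
    have hinv : ∀ t < T, ∀ i, (a i t ∈ A ↔ a i (t + 1) ∈ A) := by
      intro t ht i
      let f := Equiv.ofBijective _ (hbij t ht.le)
      let g := Equiv.ofBijective _ (hbij (t + 1) ht)
      let s : Equiv.Perm V := f.symm.trans g
      have hs : ∀ j, s (a j t) = a j (t + 1) := by
        intro j
        change g (f.symm (f j)) = g j
        rw [Equiv.symm_apply_apply]
      have hsurj : ∀ y, ∃ j, a j t = y := fun y => (hbij t ht.le).2 y
      by_contra hne
      by_cases hi : a i t ∈ A
      · have hi' : a i (t + 1) ∉ A := fun h => hne ⟨fun _ => h, fun _ => hi⟩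
        obtain ⟨y, hy, hy'⟩ := exists_cross_back s A hi (by rw [hs]; exact hi')
        obtain ⟨j, rfl⟩ := hsurj y
        rw [hs] at hy'
        exact hno t ht i j hi hi' hy hy'
      · have hi' : a i (t + 1) ∈ A := by
          by_contra h
          exact hne ⟨fun h' => absurd h' hi, fun h' => absurd h' h⟩
        obtain ⟨y, hy, hy'⟩ := exists_cross_back s Aᶜ (x := a i t) hi
          (by rw [hs]; exact fun h => h hi')
        obtain ⟨j, rfl⟩ := hsurj y
        rw [hs] at hy'
        exact hno t ht j i (not_not.1 hy) hy' hi hi'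
    have hall : ∀ t ≤ T, (a i0 0 ∈ A ↔ a i0 t ∈ A) := by
      intro t
      induction t with
      | zero => intro _; exact Iff.rfl
      | succ t ih =>
        intro ht
        exact (ih (by omega)).trans (hinv t (by omega) i0)
    obtain ⟨t, ht, htu⟩ := (htour i0).2.1 u
    obtain ⟨t', ht', htv⟩ := (htour i0).2.1 v
    have k1 := hall t ht
    have k2 := hall t' ht'
    rw [htu] at k1
    rw [htv] at k2
    exact hvA (k2.1 (k1.2 huA))

/-- a graph on `n ≥ 2` vertices admits a feasible agency (with
parking) with `k = n` agents and some time horizon `T` iff it is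
2-edge-connected, i.e. connected and without cut edges. -/
theorem stmt10 {V : Type*} [Fintype V] (G : SimpleGraph V)
    (hn : 2 ≤ Fintype.card V) :
    (∃ T : ℕ, ∃ a : Fin (Fintype.card V) → ℕ → V,
        FeasibleAgency G (Fintype.card V) T a) ↔
      (G.Connected ∧ ∀ e : Sym2 V, ¬ G.IsBridge e) := by
  constructor
  · rintro ⟨T, a, h⟩
    exact bridgeless_of_agency hn h
  · rintro ⟨hc, hb⟩
    exact agency_of_bridgeless hc hb
end

section
/- Let G be a star on n ≥ 3 vertices (one center adjacent to n − 1 leaves, no other edges). Then the maximum integer k such that G admits a feasible agency with k agents and some time horizon T equals n − 2. -/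
open SimpleGraph

/-- Unreduced leaf index of agent `i` after `s` hole moves. -/
def starPos (k i s : ℕ) : ℕ := i + (s + i) / k

theorem starPos_inj {k i j s : ℕ} (hi : i < k) (hj : j < k)
    (h : starPos k i s % (k + 1) = starPos k j s % (k + 1)) : i = j := by
  have key : ∀ i j : ℕ, i < j → j < k → starPos k i s % (k + 1) = starPos k j s % (k + 1) → False := by
    intro i j hij hj h
    unfold starPos at h
    have h1 : (s + i) / k ≤ (s + j) / k := Nat.div_le_div_right (by omega)
    have h2 : (s + j) / k ≤ (s + i) / k + 1 := by
      rw [← Nat.add_div_right _ (by omega)]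
      exact Nat.div_le_div_right (by omega)
    have h3 : (k + 1) ∣ (j + (s + j) / k) - (i + (s + i) / k) :=
      (Nat.modEq_iff_dvd' (by omega)).1 h
    have := Nat.le_of_dvd (by omega) h3
    omega
  rcases lt_trichotomy i j with h' | h' | h'
  · exact (key i j h' hj h).elim
  · exact h'
  · exact (key j i h' hi h.symm).elim

theorem starPos_move {k i s : ℕ} (h : starPos k i s ≠ starPos k i (s + 1)) :
    k ∣ s + i + 1 := by
  by_contra hd
  apply h
  unfold starPos
  rw [show s + 1 + i = s + i + 1 by omega, Nat.succ_div, if_neg hd, Nat.add_zero]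

theorem starPos_move_unique {k i j s : ℕ} (hi : i < k) (hj : j < k)
    (h1 : k ∣ s + i + 1) (h2 : k ∣ s + j + 1) : i = j := by
  rcases lt_trichotomy i j with h' | h' | h'
  · have := Nat.le_of_dvd (by omega) (Nat.dvd_sub h2 h1); omega
  · exact h'
  · have := Nat.le_of_dvd (by omega) (Nat.dvd_sub h1 h2); omega

open Classical in
/-- The explicit schedule. -/
noncomputable def starSched {V : Type*} (c : V) (L : ℕ → V) (k i t : ℕ) : V :=
  if t % 2 = 0 then L (starPos k i (t / 2))
  else if starPos k i (t / 2) = starPos k i (t / 2 + 1) then L (starPos k i (t / 2)) else c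

theorem starSched_even {V : Type*} (c : V) (L : ℕ → V) (k i s : ℕ) :
    starSched c L k i (2 * s) = L (starPos k i s) := by
  have h1 : 2 * s % 2 = 0 := by omega
  have h2 : 2 * s / 2 = s := by omega
  simp [starSched]

open Classical in
theorem starSched_odd {V : Type*} (c : V) (L : ℕ → V) (k i s : ℕ) :
    starSched c L k i (2 * s + 1) =
      if starPos k i s = starPos k i (s + 1) then L (starPos k i s) else c := by
  have h1 : (2 * s + 1) % 2 ≠ 0 := by omega
  have h2 : (2 * s + 1) / 2 = s := by omega
  unfold starSched
  rw [if_neg h1, h2]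

theorem star_lower {V : Type*} (G : SimpleGraph V) (c : V)
    (hc : ∀ x y : V, G.Adj x y ↔ (x = c ∧ y ≠ c) ∨ (y = c ∧ x ≠ c))
    (k : ℕ) (L : ℕ → V) (hLc : ∀ x, L x ≠ c)
    (hL : ∀ x y, L x = L y ↔ x % (k + 1) = y % (k + 1))
    (hs : ∀ v, v ≠ c → ∃ x < k + 1, L x = v) :
    FeasibleAgency G k (2 * (k * (k + 1))) (fun i t => starSched c L k i t) := by
  refine ⟨fun i => ⟨?_, ?_, ?_⟩, fun i j hij => ⟨?_, ?_⟩⟩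
  · intro t _
    obtain ⟨s, rfl | rfl⟩ := Nat.even_or_odd' t
    · simp only [starSched_even, starSched_odd, hc]
      split_ifs
      · exact Or.inl rfl
      · exact Or.inr (Or.inr ⟨rfl, hLc _⟩)
    · simp only [show 2 * s + 1 + 1 = 2 * (s + 1) by ring]
      simp only [starSched_even, starSched_odd, hc]
      split_ifs with h
      · left; rw [h]
      · exact Or.inr (Or.inl ⟨rfl, hLc _⟩)
  · intro v
    have hi := i.2
    by_cases hv : v = c
    · refine ⟨2 * (k - 1 - i) + 1, ?_, ?_⟩
      · nlinarith [Nat.sub_le (k - 1) i, Nat.sub_le k 1, Nat.sub_add_cancel (show 1 ≤ k by omega)]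
      · simp only [starSched_odd]
        rw [if_neg, hv]
        unfold starPos
        rw [show k - 1 - i + 1 + (i : ℕ) = k by omega, show k - 1 - i + (i : ℕ) = k - 1 by omega,
          Nat.div_self (by omega), Nat.div_eq_of_lt (by omega)]
        omega
    · obtain ⟨x, hx, rfl⟩ := hs v hv
      have : ∃ q, 1 ≤ q ∧ q ≤ k + 1 ∧ (i + q) % (k + 1) = x % (k + 1) := by
        by_cases h : (i : ℕ) < x
        · exact ⟨x - i, by omega, by omega, by congr 1; omega⟩
        · refine ⟨x + (k + 1) - i, by omega, by omega, ?_⟩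
          rw [show (i : ℕ) + (x + (k + 1) - i) = x + (k + 1) by omega, Nat.add_mod_right]
      obtain ⟨q, h1, h2, h3⟩ := this
      have h4 : k * 1 ≤ k * q := Nat.mul_le_mul_left _ h1
      have h5 : k * q ≤ k * (k + 1) := Nat.mul_le_mul_left _ h2
      refine ⟨2 * (k * q - i), by omega, ?_⟩
      simp only [starSched_even]
      rw [hL, ← h3]
      unfold starPos
      rw [Nat.sub_add_cancel (by omega), Nat.mul_div_cancel_left _ (by omega)]
  · have hi := i.2
    have e := starSched_even c L k i 0
    simp only [mul_zero] at e
    simp only [e, starSched_even]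
    rw [hL]
    unfold starPos
    rw [Nat.mul_add_div (by omega), zero_add, Nat.div_eq_of_lt hi, ← Nat.add_assoc]
    simp
  · intro t _
    have hne : (i : ℕ) ≠ j := fun h => hij (Fin.ext h)
    obtain ⟨s, rfl | rfl⟩ := Nat.even_or_odd' t
    · simp only [starSched_even, ne_eq, hL]
      exact fun h => hne (starPos_inj i.2 j.2 h)
    · simp only [starSched_odd]
      split_ifs with h1 h2 h2
      · rw [ne_eq, hL]
        exact fun h => hne (starPos_inj i.2 j.2 h)
      · exact hLc _
      · exact (hLc _).symm
      · exact (hne (starPos_move_unique i.2 j.2 (starPos_move h1) (starPos_move h2))).elim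
  · rintro t _ ⟨h1, h2, h3⟩
    obtain ⟨s, rfl | rfl⟩ := Nat.even_or_odd' t
    · simp only [starSched_even, starSched_odd] at h1 h2 h3
      split_ifs at h1 h2 h3 <;> first | exact h3 rfl | exact hLc _ h1 | exact hLc _ h2.symm
    · simp only [show 2 * s + 1 + 1 = 2 * (s + 1) by ring] at h1 h2 h3
      simp only [starSched_even, starSched_odd] at h1 h2 h3
      split_ifs at h1 h3 with h
      · rw [h] at h3; exact h3 rfl
      · exact hLc _ h1.symm

theorem starAgency_invariant {V : Type*} [Fintype V] (G : SimpleGraph V) (c : V)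
    (hc : ∀ x y : V, G.Adj x y ↔ (x = c ∧ y ≠ c) ∨ (y = c ∧ x ≠ c))
    (k T : ℕ) (a : Fin k → ℕ → V) (ha : FeasibleAgency G k T a)
    (hk : Fintype.card V ≤ k + 1) (i : Fin k) (l : V) (hl : l ≠ c) (t0 : ℕ) (h0 : a i t0 = l)
    (t : ℕ) (ht : t0 ≤ t) :
    t ≤ T → a i t = l ∨ (a i t = c ∧ ∀ j, a j t ≠ l) := by
  classical
  obtain ⟨h1, h2⟩ := ha
  induction t, ht using Nat.le_induction with
  | base => exact fun _ => Or.inl h0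
  | succ t ht ih =>
    intro hT
    have mv : ∀ j, a j t = a j (t + 1) ∨ (a j t = c ∧ a j (t + 1) ≠ c) ∨
        (a j (t + 1) = c ∧ a j t ≠ c) := by
      intro j
      have := (h1 j).1 t (by omega)
      rwa [hc] at this
    have nc : ∀ j j', a j t = a j' t → j = j' := by
      intro j j' h
      by_contra hne
      exact (h2 j j' hne).1 t (by omega) h
    have nc' : ∀ j j', a j (t + 1) = a j' (t + 1) → j = j' := by
      intro j j' h
      by_contra hne
      exact (h2 j j' hne).1 (t + 1) (by omega) h
    have ec : ∀ j j', j ≠ j' → a j t = a j' (t + 1) → a j (t + 1) = a j' t →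
        a j t = a j (t + 1) := by
      intro j j' hne e1 e2
      by_contra h
      exact (h2 j j' hne).2 t (by omega) ⟨e1, e2, h⟩
    rcases ih (by omega) with h | ⟨h, hemp⟩
    · by_cases hs : a i (t + 1) = l
      · exact Or.inl hs
      · right
        have hic : a i (t + 1) = c := by
          rcases mv i with h' | h' | h'
          · exact (hs (h'.symm.trans h)).elim
          · exact (hl (h.symm.trans h'.1)).elim
          · exact h'.1
        refine ⟨hic, fun j hj => ?_⟩
        have hij : i ≠ j := by rintro rfl; exact hs hj
        rcases mv j with h' | h' | h'
        · exact hij (nc i j (by rw [h, h', hj]))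
        · exact hs ((ec i j hij (by rw [h, hj]) (by rw [hic, h'.1])).symm.trans h)
        · exact hl (hj.symm.trans h'.1)
    · by_cases hs : a i (t + 1) = c
      · right
        refine ⟨hs, fun j hj => ?_⟩
        rcases mv j with h' | h' | h'
        · exact hemp j (h'.trans hj)
        · have := nc i j (by rw [h, h'.1])
          subst this
          exact hl (hj.symm.trans hs)
        · exact hl (hj.symm.trans h'.1)
      · left
        by_contra hne
        -- the target leaf is occupied at time t
        have hsub : Finset.univ.image (fun j => a j t) = Finset.univ.erase l := by
          apply Finset.eq_of_subset_of_card_le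
          · intro x hx
            simp only [Finset.mem_image, Finset.mem_univ, true_and] at hx
            obtain ⟨j, rfl⟩ := hx
            simpa using hemp j
          · rw [Finset.card_image_of_injective _ (fun j j' => nc j j'), Finset.card_erase_of_mem
              (Finset.mem_univ _), Finset.card_univ, Finset.card_univ, Fintype.card_fin]
            omega
        have hm : a i (t + 1) ∈ Finset.univ.image (fun j => a j t) := by
          rw [hsub]; simpa using hne
        simp only [Finset.mem_image, Finset.mem_univ, true_and] at hm
        obtain ⟨j, hj⟩ := hm
        have hij : i ≠ j := by rintro rfl; exact hs (hj.symm.trans h)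
        rcases mv j with h' | h' | h'
        · exact hij (nc' i j (by rw [← hj, h']))
        · exact hs (hj.symm.trans h'.1)
        · exact hs ((ec i j hij (by rw [h, h'.1]) hj.symm).symm.trans h)

/-- for a star on `n ≥ 3` vertices (a center adjacent to all other
vertices, no other edges), the maximum number of agents in a feasible agency
(over all time horizons) is `n - 2`. -/
theorem stmt12 {V : Type*} [Fintype V] (G : SimpleGraph V)
    (hn : 3 ≤ Fintype.card V)
    (hstar : ∃ c : V, ∀ x y : V,
      G.Adj x y ↔ (x = c ∧ y ≠ c) ∨ (y = c ∧ x ≠ c)) :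
    IsGreatest {k : ℕ | ∃ T : ℕ, ∃ a : Fin k → ℕ → V, FeasibleAgency G k T a}
      (Fintype.card V - 2) := by
  classical
  obtain ⟨c, hc⟩ := hstar
  have hcard : Fintype.card {x : V // x ≠ c} = Fintype.card V - 2 + 1 := by
    rw [Fintype.card_subtype_compl, Fintype.card_subtype_eq]; omega
  refine ⟨?_, ?_⟩
  · generalize Fintype.card V - 2 = k at hcard
    let e := Fintype.equivFinOfCardEq hcard
    refine ⟨_, _, star_lower G c hc k
      (fun x => (e.symm ⟨x % (k + 1), Nat.mod_lt _ (by omega)⟩ : V)) ?_ ?_ ?_⟩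
    · exact fun x => (e.symm _).2
    · intro x y
      simp [← Subtype.ext_iff]
    · intro v hv
      refine ⟨e ⟨v, hv⟩, (e ⟨v, hv⟩).2, ?_⟩
      simp [Nat.mod_eq_of_lt (e ⟨v, hv⟩).2]
  · rintro k ⟨T, a, ha⟩
    by_contra hlt
    have hk : Fintype.card V ≤ k + 1 := by omega
    let i : Fin k := ⟨0, by omega⟩
    have : Nontrivial {x : V // x ≠ c} := by
      rw [← Fintype.one_lt_card_iff_nontrivial]; omega
    obtain ⟨⟨x, hx⟩, ⟨y, hy⟩, hxy⟩ := exists_pair_ne {x : V // x ≠ c}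
    have hxy : x ≠ y := fun h => hxy (Subtype.ext h)
    obtain ⟨t, ht, htx⟩ := (ha.1 i).2.1 x
    obtain ⟨u, hu, huy⟩ := (ha.1 i).2.1 y
    rcases le_total t u with h | h
    · rcases starAgency_invariant G c hc k T a ha hk i x hx t htx u h hu with h' | h'
      · exact hxy (h'.symm.trans huy)
      · exact hy (huy.symm.trans h'.1)
    · rcases starAgency_invariant G c hc k T a ha hk i y hy u huy t h ht with h' | h'
      · exact hxy (htx.symm.trans h')
      · exact hx (htx.symm.trans h'.1)
end
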